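/- arXiv:2508.09435 — 9 statements merged into one kernel-verified Lean document; each statement's English description precedes it below -/
import Mathlib

section
/- Let K be a field and let A, B be K-vector spaces such that A is the internal direct sum A = F ⊕ A_0 ⊕ ... ⊕ A_s and B is the internal direct sum B = B_0 ⊕ ... ⊕ B_s of linear subspaces, for some natural number s. Let T : A → B be a (possibly nonlinear) map, T_* : A → B a linear map, and R := T − T_* (pointwise difference). Assume: (i) T_*(A_n) ⊆ B_n for all n ∈ {0,...,s}; (ii) T_* is surjective; (iii) there is a linear map S_* : B → A with T_* ∘ S_* = id_B and S_*(B_n) ⊆ A_n for all n; (iv) for all n ∈ {0,...,s−1}, R(A_n ⊕ ... ⊕ A_s) ⊆ B_{n+1} ⊕ ... ⊕ B_s; (v) R(A_s) = {0}; (vi) for all n ∈ {1,...,s} and every x = x_0 + ... + x_s with x_k ∈ A_k (zero F-component), proj_{B_n}(R(x_0 + ... + x_s)) = proj_{B_n}(R(x_0 + ... + x_{n−1})). Then T is surjective. -/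
/-- Abstract surjectivity theorem for the quasi-Trefftz operator.
`A = F ⊕ A₀ ⊕ ⋯ ⊕ A_s` and `B = B₀ ⊕ ⋯ ⊕ B_s` are internal direct sums of subspaces,
encoded through the (uniquely determined) linear projections `πF, πA n, πB n`
onto the summands.  Under hypotheses (i)–(vi) on `T = T⋆ + R`, the (possibly
nonlinear) map `T` is surjective. -/
theorem stmt_0
    {K : Type*} [Field K]
    {A B : Type*} [AddCommGroup A] [Module K A] [AddCommGroup B] [Module K B]
    (s : ℕ)
    (F : Submodule K A) (𝒜 : Fin (s + 1) → Submodule K A)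
    (ℬ : Fin (s + 1) → Submodule K B)
    -- the projections associated with the internal direct sum decompositions
    (πF : A →ₗ[K] A) (πA : Fin (s + 1) → A →ₗ[K] A)
    (πB : Fin (s + 1) → B →ₗ[K] B)
    (hπF_mem : ∀ x : A, πF x ∈ F)
    (hπA_mem : ∀ (n) (x : A), πA n x ∈ 𝒜 n)
    (hπB_mem : ∀ (n) (y : B), πB n y ∈ ℬ n)
    (hπF_id : ∀ x ∈ F, πF x = x)
    (hπA_id : ∀ n, ∀ x ∈ 𝒜 n, πA n x = x)
    (hπB_id : ∀ n, ∀ y ∈ ℬ n, πB n y = y)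
    (hπF_zero : ∀ n, ∀ x ∈ 𝒜 n, πF x = 0)
    (hπA_zeroF : ∀ n, ∀ x ∈ F, πA n x = 0)
    (hπA_zero : ∀ n m, n ≠ m → ∀ x ∈ 𝒜 m, πA n x = 0)
    (hπB_zero : ∀ n m, n ≠ m → ∀ y ∈ ℬ m, πB n y = 0)
    (hA_decomp : ∀ x : A, x = πF x + ∑ n, πA n x)
    (hB_decomp : ∀ y : B, y = ∑ n, πB n y)
    -- the maps
    (T : A → B) (Tstar : A →ₗ[K] B) (R : A → B)
    (hR : ∀ x, R x = T x - Tstar x)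
    -- (i)
    (hT1 : ∀ n, ∀ x ∈ 𝒜 n, Tstar x ∈ ℬ n)
    -- (ii)
    (hT2 : Function.Surjective Tstar)
    -- (iii)
    (Sstar : B →ₗ[K] A)
    (hS1 : ∀ y, Tstar (Sstar y) = y)
    (hS2 : ∀ n, ∀ y ∈ ℬ n, Sstar y ∈ 𝒜 n)
    -- (iv)
    (hR1 : ∀ n : Fin (s + 1), (n : ℕ) < s →
      ∀ x ∈ (⨆ k ≥ n, 𝒜 k : Submodule K A), R x ∈ (⨆ k > n, ℬ k : Submodule K B))
    -- (v)
    (hR2 : ∀ x ∈ 𝒜 (Fin.last s), R x = 0)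
    -- (vi)
    (hR3 : ∀ n : Fin (s + 1), 0 < n → ∀ xk : Fin (s + 1) → A, (∀ k, xk k ∈ 𝒜 k) →
      πB n (R (∑ k, xk k)) =
        πB n (R (∑ k ∈ Finset.univ.filter (fun k => k < n), xk k))) :
    Function.Surjective T := by
  intro y
  have key : ∀ n : Fin (s + 1), ∀ xk : Fin (s + 1) → A, (∀ k, xk k ∈ 𝒜 k) →
      πB n (R (∑ k, xk k)) =
        πB n (R (∑ k ∈ Finset.univ.filter (fun k => k < n), xk k)) := by
    intro n xk hxk
    by_cases hn : 0 < n
    · exact hR3 n hn xk hxk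
    have hn0 : n = 0 := by
      by_contra h
      exact hn (Fin.pos_iff_ne_zero.mpr h)
    subst hn0
    have hz : R 0 = 0 := hR2 0 (Submodule.zero_mem _)
    have he : (Finset.univ.filter (fun k : Fin (s + 1) => k < 0)) = ∅ := by
      ext k; simp
    rw [he, Finset.sum_empty, hz, map_zero]
    rcases Nat.eq_zero_or_pos s with hs | hs
    · subst hs
      have h1 : R (∑ k, xk k) = 0 := by
        apply hR2
        simpa using hxk 0
      rw [h1, map_zero]
    · have h1 : R (∑ k, xk k) ∈ (⨆ k > (0 : Fin (s + 1)), ℬ k : Submodule K B) := by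
        apply hR1 0 (by simpa using hs)
        apply Submodule.sum_mem
        intro k _
        exact Submodule.mem_iSup_of_mem k (Submodule.mem_iSup_of_mem (Fin.zero_le k) (hxk k))
      have h2 : (⨆ k > (0 : Fin (s + 1)), ℬ k : Submodule K B) ≤ LinearMap.ker (πB 0) := by
        refine iSup₂_le fun k hk z hz => ?_
        exact hπB_zero 0 k (ne_of_lt hk) z hz
      exact h2 h1
  obtain ⟨x, hx⟩ : ∃ x : Fin (s + 1) → A, ∀ n, x n =
      Sstar (πB n y - πB n (R (∑ k ∈ Finset.univ.filter (fun k => k < n), x k))) := by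
    let G : ∀ n : Fin (s + 1), (∀ k, k < n → A) → A := fun n f =>
      Sstar (πB n y - πB n (R (∑ k, if h : k < n then f k h else 0)))
    have wf : WellFounded (fun a b : Fin (s + 1) => a < b) := wellFounded_lt
    refine ⟨wf.fix G, fun n => ?_⟩
    rw [wf.fix_eq G n]
    simp only [G, Finset.sum_filter, dite_eq_ite]
  have hxm : ∀ k, x k ∈ 𝒜 k := by
    intro k
    rw [hx k]
    exact hS2 k _ (Submodule.sub_mem _ (hπB_mem _ _) (hπB_mem _ _))
  refine ⟨∑ k, x k, ?_⟩
  have hT : T (∑ k, x k) = Tstar (∑ k, x k) + R (∑ k, x k) := by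
    rw [hR]; abel
  have h3 : ∀ n, Tstar (x n) = πB n y - πB n (R (∑ k, x k)) := by
    intro n
    rw [key n x hxm, hx n, hS1]
  rw [hT, map_sum, Finset.sum_congr rfl (fun n _ => h3 n), Finset.sum_sub_distrib,
    ← hB_decomp, ← hB_decomp]
  abel
end

section
/- Let K be a field and let A, B be K-vector spaces such that A is the internal direct sum A = F ⊕ A_0 ⊕ ... ⊕ A_s and B is the internal direct sum B = B_0 ⊕ ... ⊕ B_s of linear subspaces, for some natural number s. Let R : A → B be a map with R(A_0 ⊕ ... ⊕ A_s) ⊆ B_1 ⊕ ... ⊕ B_s and such that for all n ∈ {1,...,s} and all x_k ∈ A_k, proj_{B_n}(R(x_0 + ... + x_s)) = proj_{B_n}(R(x_0 + ... + x_{n−1})). Let S_* : B → A be a linear map with S_*(B_n) ⊆ A_n for all n. Fix y ∈ B with components y_k ∈ B_k, and suppose x = x_0 + ... + x_s with x_k ∈ A_k satisfies x_0 = S_*(y_0) and x_k = S_*( y_k − proj_{B_k}( R(x_0 + ... + x_{k−1}) ) ) for all k ∈ {1,...,s}. Then x = S_*( y − R(x) ). -/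
/-- With the internal direct sums `A = F ⊕ A₀ ⊕ ⋯ ⊕ A_s` and
`B = B₀ ⊕ ⋯ ⊕ B_s` (encoded by their projections), `R : A → B` satisfying
`R(A₀ ⊕ ⋯ ⊕ A_s) ⊆ B₁ ⊕ ⋯ ⊕ B_s` and the projection property (vi), and `S⋆`
linear with `S⋆(Bₙ) ⊆ Aₙ`: if the components `xₖ ∈ Aₖ` satisfy the forward
substitution recursion for a given `y ∈ B`, then `x = S⋆(y − R(x))`. -/
theorem stmt_4
    {K : Type*} [Field K]
    {A B : Type*} [AddCommGroup A] [Module K A] [AddCommGroup B] [Module K B]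
    (s : ℕ)
    (F : Submodule K A) (𝒜 : Fin (s + 1) → Submodule K A)
    (ℬ : Fin (s + 1) → Submodule K B)
    (πF : A →ₗ[K] A) (πA : Fin (s + 1) → A →ₗ[K] A)
    (πB : Fin (s + 1) → B →ₗ[K] B)
    (hπF_mem : ∀ x : A, πF x ∈ F)
    (hπA_mem : ∀ (n) (x : A), πA n x ∈ 𝒜 n)
    (hπB_mem : ∀ (n) (y : B), πB n y ∈ ℬ n)
    (hπF_id : ∀ x ∈ F, πF x = x)
    (hπA_id : ∀ n, ∀ x ∈ 𝒜 n, πA n x = x)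
    (hπB_id : ∀ n, ∀ y ∈ ℬ n, πB n y = y)
    (hπF_zero : ∀ n, ∀ x ∈ 𝒜 n, πF x = 0)
    (hπA_zeroF : ∀ n, ∀ x ∈ F, πA n x = 0)
    (hπA_zero : ∀ n m, n ≠ m → ∀ x ∈ 𝒜 m, πA n x = 0)
    (hπB_zero : ∀ n m, n ≠ m → ∀ y ∈ ℬ m, πB n y = 0)
    (hA_decomp : ∀ x : A, x = πF x + ∑ n, πA n x)
    (hB_decomp : ∀ y : B, y = ∑ n, πB n y)
    -- the maps
    (R : A → B)
    (hR0 : ∀ x ∈ (⨆ k, 𝒜 k : Submodule K A),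
      R x ∈ (⨆ k > (0 : Fin (s + 1)), ℬ k : Submodule K B))
    (hR3 : ∀ n : Fin (s + 1), 0 < n → ∀ xk : Fin (s + 1) → A, (∀ k, xk k ∈ 𝒜 k) →
      πB n (R (∑ k, xk k)) =
        πB n (R (∑ k ∈ Finset.univ.filter (fun k => k < n), xk k)))
    (Sstar : B →ₗ[K] A)
    (hS : ∀ n, ∀ y ∈ ℬ n, Sstar y ∈ 𝒜 n)
    -- the fixed data
    (y : B) (xk : Fin (s + 1) → A)
    (hxk_mem : ∀ k, xk k ∈ 𝒜 k)
    (hxk0 : xk 0 = Sstar (πB 0 y))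
    (hxk : ∀ k : Fin (s + 1), 0 < k →
      xk k = Sstar (πB k y -
        πB k (R (∑ l ∈ Finset.univ.filter (fun l => l < k), xk l)))) :
    ∑ k, xk k = Sstar (y - R (∑ k, xk k)) := by
  have h0 : πB 0 (R (∑ k, xk k)) = 0 := by
    have hx : ∑ k, xk k ∈ (⨆ k, 𝒜 k : Submodule K A) :=
      Submodule.sum_mem _ (fun k _ => Submodule.mem_iSup_of_mem k (hxk_mem k))
    have hle : (⨆ k > (0 : Fin (s + 1)), ℬ k : Submodule K B) ≤ LinearMap.ker (πB 0) := by
      refine iSup₂_le ?_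
      intro k hk z hz
      exact LinearMap.mem_ker.mpr (hπB_zero 0 k (ne_of_lt hk) z hz)
    exact LinearMap.mem_ker.mp (hle (hR0 _ hx))
  have key : ∀ k, xk k = Sstar (πB k (y - R (∑ k, xk k))) := by
    intro k
    rcases Fin.eq_zero_or_eq_succ k with rfl | ⟨j, rfl⟩
    · rw [map_sub (πB 0), h0, sub_zero]
      exact hxk0
    · rw [map_sub (πB _), hR3 _ (Fin.succ_pos j) xk hxk_mem]
      exact hxk _ (Fin.succ_pos j)
  calc ∑ k, xk k = ∑ k, Sstar (πB k (y - R (∑ k, xk k))) :=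
        Finset.sum_congr rfl (fun k _ => key k)
    _ = Sstar (∑ k, πB k (y - R (∑ k, xk k))) := (map_sum Sstar _ _).symm
    _ = Sstar (y - R (∑ k, xk k)) := by rw [← hB_decomp]
end

section
/- Let K be a field and let A, B be K-vector spaces such that A is the internal direct sum A = F ⊕ A_0 ⊕ ... ⊕ A_s and B is the internal direct sum B = B_0 ⊕ ... ⊕ B_s of linear subspaces, for some natural number s. Let T : A → B be a (possibly nonlinear) map, T_* : A → B a linear map, and R := T − T_*. Assume: T_*(A_n) ⊆ B_n for all n; R(A_n ⊕ ... ⊕ A_s) ⊆ B_{n+1} ⊕ ... ⊕ B_s for all n ∈ {0,...,s−1}; R(A_s) = {0}; T_*(F) = {0}; each A_n decomposes as an internal direct sum A_n = U_n ⊕ V_n such that the restriction of T_* to V_n is a linear bijection onto B_n, with inverse S_n : B_n → V_n; and for every x = z + x_0 + ... + x_s with z ∈ F and x_k ∈ A_k, proj_{B_0}(R(x)) = proj_{B_0}(R(z)) and proj_{B_n}(R(x)) = proj_{B_n}(R(z + x_0 + ... + x_{n−1})) for all n ∈ {1,...,s}. Fix y ∈ B with components y_k ∈ B_k, z ∈ F,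 and u_k ∈ U_k for k ∈ {0,...,s}. Define recursively x_0 := u_0 + S_0( y_0 − proj_{B_0}(R(z)) − T_*(u_0) ) and, for k ∈ {1,...,s}, x_k := u_k + S_k( y_k − proj_{B_k}( R(z + x_0 + ... + x_{k−1}) ) − T_*(u_k) ). Then x := z + x_0 + ... + x_s satisfies T(x) = y. -/
/-- Correctness of the construction algorithm: with
`A = F ⊕ A₀ ⊕ ⋯ ⊕ A_s`, `B = B₀ ⊕ ⋯ ⊕ B_s` internal direct sums (encoded by their
projections), `T = T⋆ + R`, `T⋆` linear with `T⋆(Aₙ) ⊆ Bₙ`, `T⋆(F) = {0}`,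
`R(Aₙ ⊕ ⋯ ⊕ A_s) ⊆ B_{n+1} ⊕ ⋯ ⊕ B_s` for `n < s`, `R(A_s) = {0}`, internal
splittings `Aₙ = Uₙ ⊕ Vₙ` with `T⋆|_{Vₙ} : Vₙ → Bₙ` a linear bijection with inverse
`Sₙ`, and the projection property on `R`: the recursively defined components
`xₖ` produce `x = z + x₀ + ⋯ + x_s` with `T(x) = y`. -/
theorem stmt_5
    {K : Type*} [Field K]
    {A B : Type*} [AddCommGroup A] [Module K A] [AddCommGroup B] [Module K B]
    (s : ℕ)
    (F : Submodule K A) (𝒜 : Fin (s + 1) → Submodule K A)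
    (ℬ : Fin (s + 1) → Submodule K B)
    (πF : A →ₗ[K] A) (πA : Fin (s + 1) → A →ₗ[K] A)
    (πB : Fin (s + 1) → B →ₗ[K] B)
    (hπF_mem : ∀ x : A, πF x ∈ F)
    (hπA_mem : ∀ (n) (x : A), πA n x ∈ 𝒜 n)
    (hπB_mem : ∀ (n) (y : B), πB n y ∈ ℬ n)
    (hπF_id : ∀ x ∈ F, πF x = x)
    (hπA_id : ∀ n, ∀ x ∈ 𝒜 n, πA n x = x)
    (hπB_id : ∀ n, ∀ y ∈ ℬ n, πB n y = y)
    (hπF_zero : ∀ n, ∀ x ∈ 𝒜 n, πF x = 0)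
    (hπA_zeroF : ∀ n, ∀ x ∈ F, πA n x = 0)
    (hπA_zero : ∀ n m, n ≠ m → ∀ x ∈ 𝒜 m, πA n x = 0)
    (hπB_zero : ∀ n m, n ≠ m → ∀ y ∈ ℬ m, πB n y = 0)
    (hA_decomp : ∀ x : A, x = πF x + ∑ n, πA n x)
    (hB_decomp : ∀ y : B, y = ∑ n, πB n y)
    -- the maps
    (T : A → B) (Tstar : A →ₗ[K] B) (R : A → B)
    (hR : ∀ x, R x = T x - Tstar x)
    (hT1 : ∀ n, ∀ x ∈ 𝒜 n, Tstar x ∈ ℬ n)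
    (hR1 : ∀ n : Fin (s + 1), (n : ℕ) < s →
      ∀ x ∈ (⨆ k ≥ n, 𝒜 k : Submodule K A), R x ∈ (⨆ k > n, ℬ k : Submodule K B))
    (hR2 : ∀ x ∈ 𝒜 (Fin.last s), R x = 0)
    (hTF : ∀ x ∈ F, Tstar x = 0)
    -- the internal splittings `Aₙ = Uₙ ⊕ Vₙ`
    (𝒰 𝒱 : Fin (s + 1) → Submodule K A)
    (hUV_sup : ∀ n, 𝒰 n ⊔ 𝒱 n = 𝒜 n)
    (hUV_inf : ∀ n, 𝒰 n ⊓ 𝒱 n = ⊥)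
    -- `Sₙ : Bₙ → Vₙ` is the inverse of the linear bijection `T⋆|_{Vₙ} : Vₙ → Bₙ`
    (Sn : Fin (s + 1) → B →ₗ[K] A)
    (hSn_mem : ∀ n, ∀ y ∈ ℬ n, Sn n y ∈ 𝒱 n)
    (hSn_right : ∀ n, ∀ y ∈ ℬ n, Tstar (Sn n y) = y)
    (hSn_left : ∀ n, ∀ v ∈ 𝒱 n, Sn n (Tstar v) = v)
    -- projection property of `R` with respect to an `F`-component
    (hR4 : ∀ (z : A), z ∈ F → ∀ xk : Fin (s + 1) → A, (∀ k, xk k ∈ 𝒜 k) →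
      πB 0 (R (z + ∑ k, xk k)) = πB 0 (R z) ∧
      ∀ n : Fin (s + 1), 0 < n →
        πB n (R (z + ∑ k, xk k)) =
          πB n (R (z + ∑ k ∈ Finset.univ.filter (fun k => k < n), xk k)))
    -- the fixed data and the recursively constructed components
    (y : B) (z : A) (hz : z ∈ F)
    (u : Fin (s + 1) → A) (hu : ∀ k, u k ∈ 𝒰 k)
    (xk : Fin (s + 1) → A)
    (hxk0 : xk 0 = u 0 + Sn 0 (πB 0 y - πB 0 (R z) - Tstar (u 0)))
    (hxk : ∀ k : Fin (s + 1), 0 < k →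
      xk k = u k + Sn k (πB k y -
        πB k (R (z + ∑ l ∈ Finset.univ.filter (fun l => l < k), xk l)) -
        Tstar (u k))) :
    T (z + ∑ k, xk k) = y := by
  have huA : ∀ k, u k ∈ 𝒜 k := fun k => by
    rw [← hUV_sup k]; exact Submodule.mem_sup_left (hu k)
  have gen : ∀ k w, xk k = u k + Sn k (πB k y - πB k w - Tstar (u k)) →
      xk k ∈ 𝒜 k ∧ Tstar (xk k) = πB k y - πB k w := by
    intro k w h
    have hm : πB k y - πB k w - Tstar (u k) ∈ ℬ k :=
      (ℬ k).sub_mem ((ℬ k).sub_mem (hπB_mem k y) (hπB_mem k w)) (hT1 k _ (huA k))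
    have hv : Sn k (πB k y - πB k w - Tstar (u k)) ∈ 𝒜 k := by
      rw [← hUV_sup k]; exact Submodule.mem_sup_right (hSn_mem k _ hm)
    rw [h]
    refine ⟨(𝒜 k).add_mem (huA k) hv, ?_⟩
    rw [map_add, hSn_right k _ hm]
    abel
  have hmem : ∀ k, xk k ∈ 𝒜 k := by
    intro k
    rcases eq_or_ne k 0 with rfl | hk
    · exact (gen 0 _ hxk0).1
    · exact (gen k _ (hxk k (Fin.pos_iff_ne_zero.mpr hk))).1
  obtain ⟨h0, hn⟩ := hR4 z hz xk hmem
  have hT : ∀ k, Tstar (xk k) = πB k y - πB k (R (z + ∑ k, xk k)) := by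
    intro k
    rcases eq_or_ne k 0 with rfl | hk
    · rw [h0]; exact (gen 0 _ hxk0).2
    · have hp := Fin.pos_iff_ne_zero.mpr hk
      rw [hn k hp]; exact (gen k _ (hxk k hp)).2
  have hsum : Tstar (z + ∑ k, xk k) = y - R (z + ∑ k, xk k) := by
    rw [map_add, hTF z hz, zero_add, map_sum, Finset.sum_congr rfl (fun k _ => hT k),
      Finset.sum_sub_distrib, ← hB_decomp, ← hB_decomp]
  have h := hR (z + ∑ k, xk k)
  rw [hsum] at h
  have h2 : T (z + ∑ k, xk k) = R (z + ∑ k, xk k) + (y - R (z + ∑ k, xk k)) :=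
    sub_eq_iff_eq_add.mp h.symm
  rw [h2]
  abel
end

section
/- Let K be a field and let A, B be K-vector spaces such that A is the internal direct sum A = F ⊕ A_0 ⊕ ... ⊕ A_s and B is the internal direct sum B = B_0 ⊕ ... ⊕ B_s of linear subspaces, for some natural number s. Let T : A → B be a (possibly nonlinear) map, T_* : A → B a linear map, and R := T − T_*. Assume: T_*(A_n) ⊆ B_n for all n; R(A_n ⊕ ... ⊕ A_s) ⊆ B_{n+1} ⊕ ... ⊕ B_s for all n ∈ {0,...,s−1}; R(A_s) = {0}; T_*(F) = {0}; each A_n decomposes as an internal direct sum A_n = U_n ⊕ V_n such that the restriction of T_* to V_n is a linear bijection onto B_n; and for every x = z + x_0 + ... + x_s with z ∈ F and x_k ∈ A_k, proj_{B_0}(R(x)) = proj_{B_0}(R(z)) and proj_{B_n}(R(x)) = proj_{B_n}(R(z + x_0 + ... + x_{n−1})) for all n ∈ {1,...,s}. Then for every y ∈ B, every z ∈ F, and every choice of u_k ∈ U_k (k = 0,...,s), there exists x ∈ A with T(x) = y whose F-component equals z and whose U_k-component equals u_k for every k ∈ {0,...,s} (components taken with respect to the decomposition A = F ⊕ (U_0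 ⊕ V_0) ⊕ ... ⊕ (U_s ⊕ V_s)). -/
/-- Existence of counterimages with prescribed free components:
under the hypotheses of the algorithmic theorem, for every `y ∈ B`, every `z ∈ F`
and every choice of `uₖ ∈ Uₖ`, there is `x ∈ A` with `T(x) = y` whose `F`-component
is `z` and whose `Uₖ`-component is `uₖ` (with respect to
`A = F ⊕ (U₀ ⊕ V₀) ⊕ ⋯ ⊕ (U_s ⊕ V_s)`), i.e. `x = z + ∑ₖ (uₖ + vₖ)` with `vₖ ∈ Vₖ`. -/
theorem stmt_6
    {K : Type*} [Field K]
    {A B : Type*} [AddCommGroup A] [Module K A] [AddCommGroup B] [Module K B]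
    (s : ℕ)
    (F : Submodule K A) (𝒜 : Fin (s + 1) → Submodule K A)
    (ℬ : Fin (s + 1) → Submodule K B)
    (πF : A →ₗ[K] A) (πA : Fin (s + 1) → A →ₗ[K] A)
    (πB : Fin (s + 1) → B →ₗ[K] B)
    (hπF_mem : ∀ x : A, πF x ∈ F)
    (hπA_mem : ∀ (n) (x : A), πA n x ∈ 𝒜 n)
    (hπB_mem : ∀ (n) (y : B), πB n y ∈ ℬ n)
    (hπF_id : ∀ x ∈ F, πF x = x)
    (hπA_id : ∀ n, ∀ x ∈ 𝒜 n, πA n x = x)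
    (hπB_id : ∀ n, ∀ y ∈ ℬ n, πB n y = y)
    (hπF_zero : ∀ n, ∀ x ∈ 𝒜 n, πF x = 0)
    (hπA_zeroF : ∀ n, ∀ x ∈ F, πA n x = 0)
    (hπA_zero : ∀ n m, n ≠ m → ∀ x ∈ 𝒜 m, πA n x = 0)
    (hπB_zero : ∀ n m, n ≠ m → ∀ y ∈ ℬ m, πB n y = 0)
    (hA_decomp : ∀ x : A, x = πF x + ∑ n, πA n x)
    (hB_decomp : ∀ y : B, y = ∑ n, πB n y)
    -- the maps
    (T : A → B) (Tstar : A →ₗ[K] B) (R : A → B)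
    (hR : ∀ x, R x = T x - Tstar x)
    (hT1 : ∀ n, ∀ x ∈ 𝒜 n, Tstar x ∈ ℬ n)
    (hR1 : ∀ n : Fin (s + 1), (n : ℕ) < s →
      ∀ x ∈ (⨆ k ≥ n, 𝒜 k : Submodule K A), R x ∈ (⨆ k > n, ℬ k : Submodule K B))
    (hR2 : ∀ x ∈ 𝒜 (Fin.last s), R x = 0)
    (hTF : ∀ x ∈ F, Tstar x = 0)
    -- the internal splittings `Aₙ = Uₙ ⊕ Vₙ`
    (𝒰 𝒱 : Fin (s + 1) → Submodule K A)
    (hUV_sup : ∀ n, 𝒰 n ⊔ 𝒱 n = 𝒜 n)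
    (hUV_inf : ∀ n, 𝒰 n ⊓ 𝒱 n = ⊥)
    -- `T⋆|_{Vₙ}` is a (linear) bijection from `Vₙ` onto `Bₙ`
    (hTV : ∀ n, Set.BijOn Tstar (𝒱 n : Set A) (ℬ n : Set B))
    -- projection property of `R` with respect to an `F`-component
    (hR4 : ∀ (z : A), z ∈ F → ∀ xk : Fin (s + 1) → A, (∀ k, xk k ∈ 𝒜 k) →
      πB 0 (R (z + ∑ k, xk k)) = πB 0 (R z) ∧
      ∀ n : Fin (s + 1), 0 < n →
        πB n (R (z + ∑ k, xk k)) =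
          πB n (R (z + ∑ k ∈ Finset.univ.filter (fun k => k < n), xk k))) :
    ∀ y : B, ∀ z ∈ F, ∀ u : Fin (s + 1) → A, (∀ k, u k ∈ 𝒰 k) →
      ∃ v : Fin (s + 1) → A, (∀ k, v k ∈ 𝒱 k) ∧
        T (z + ∑ k, (u k + v k)) = y := by
  intro y z hz u hu
  have hUA : ∀ k, 𝒰 k ≤ 𝒜 k := fun k => (hUV_sup k) ▸ le_sup_left
  have hVA : ∀ k, 𝒱 k ≤ 𝒜 k := fun k => (hUV_sup k) ▸ le_sup_right
  have key : ∀ m : ℕ, ∃ v : Fin (s + 1) → A, (∀ k, v k ∈ 𝒱 k) ∧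
      ∀ n : Fin (s + 1), (n : ℕ) < m → Tstar (u n + v n) =
        πB n (y - R (z + ∑ k ∈ Finset.univ.filter (fun k => k < n), (u k + v k))) := by
    intro m
    induction m with
    | zero => exact ⟨fun _ => 0, fun k => (𝒱 k).zero_mem, fun n hn => absurd hn (Nat.not_lt_zero _)⟩
    | succ m ih =>
      obtain ⟨v, hv, hvn⟩ := ih
      by_cases hm : m < s + 1
      · let M : Fin (s + 1) := ⟨m, hm⟩
        have hb : πB M (y - R (z + ∑ k ∈ Finset.univ.filter (fun k => k < M), (u k + v k)))
            - Tstar (u M) ∈ ℬ M :=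
          (ℬ M).sub_mem (hπB_mem _ _) (hT1 M _ (hUA M (hu M)))
        obtain ⟨w, hw, hwe⟩ := (hTV M).surjOn hb
        have hsum : ∀ n : Fin (s + 1), n ≤ M →
            ∑ k ∈ Finset.univ.filter (fun k => k < n), (u k + Function.update v M w k) =
            ∑ k ∈ Finset.univ.filter (fun k => k < n), (u k + v k) := by
          intro n hn
          apply Finset.sum_congr rfl
          intro k hk
          have hk' : k < n := (Finset.mem_filter.1 hk).2
          rw [Function.update_of_ne (ne_of_lt (lt_of_lt_of_le hk' hn))]
        refine ⟨Function.update v M w, ?_, ?_⟩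
        · intro k
          by_cases hk : k = M
          · subst hk
            rw [Function.update_self]
            exact hw
          · rw [Function.update_of_ne hk]
            exact hv k
        · intro n hn
          have hnM : n ≤ M := Fin.le_def.2 (Nat.lt_succ_iff.1 hn)
          rw [hsum n hnM]
          by_cases hk : n = M
          · subst hk
            rw [Function.update_self, map_add, hwe]
            abel
          · rw [Function.update_of_ne hk]
            exact hvn n (Fin.lt_def.1 (lt_of_le_of_ne hnM hk))
      · exact ⟨v, hv, fun n _ => hvn n (by have := n.2; omega)⟩
  obtain ⟨v, hv, hvn⟩ := key (s + 1)
  have hA : ∀ k, u k + v k ∈ 𝒜 k := fun k =>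
    (𝒜 k).add_mem (hUA k (hu k)) (hVA k (hv k))
  refine ⟨v, hv, ?_⟩
  rw [hB_decomp (T _), hB_decomp y]
  apply Finset.sum_congr rfl
  intro n _
  have hTx : T (z + ∑ k, (u k + v k)) =
      R (z + ∑ k, (u k + v k)) + ∑ k, Tstar (u k + v k) := by
    rw [hR, map_add Tstar z, hTF z hz, map_sum]
    abel
  have h1 : πB n (∑ k, Tstar (u k + v k)) = Tstar (u n + v n) := by
    rw [map_sum, Finset.sum_eq_single n]
    · exact hπB_id n _ (hT1 n _ (hA n))
    · intro k _ hk
      exact hπB_zero n k (Ne.symm hk) _ (hT1 k _ (hA k))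
    · simp
  have h2 : πB n (R (z + ∑ k, (u k + v k))) =
      πB n (R (z + ∑ k ∈ Finset.univ.filter (fun k => k < n), (u k + v k))) := by
    obtain ⟨h0, hp⟩ := hR4 z hz (fun k => u k + v k) hA
    by_cases hn : n = 0
    · subst hn
      simpa using h0
    · exact hp n (Fin.pos_iff_ne_zero.2 hn)
  rw [hTx, map_add, h1, h2, hvn n n.2, map_sub]
  abel
end

section
/- Let K be a field of characteristic zero, d ≥ 1, and for each multi-index j ∈ ℕ^d with |j| = 2 let c_j ∈ K. Define the linear operator L_* on polynomials in d variables over K by L_*(P) = Σ_{|j|=2} c_j ∂^j P, where ∂^j denotes the corresponding iterated formal partial derivative. Suppose there exists k ∈ {1,...,d} such that c_{2e_k} ≠ 0, where 2e_k is the multi-index with k-th entry 2 and all other entries 0. Then for every n ∈ ℕ, L_* maps the space of homogeneous polynomials of degree n+2 onto the space of homogeneous polynomials of degree n; that is, every homogeneous polynomial of degree n equals L_*(Q) for some homogeneous polynomial Q of degree n+2. -/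
/-- The iterated formal partial derivative `∂^j = ∂₁^{j₁} ∘ ⋯ ∘ ∂_d^{j_d}`
associated with a multi-index `j : Fin d →₀ ℕ`. -/
noncomputable def iterPDeriv {K : Type*} [CommSemiring K] {d : ℕ} (j : Fin d →₀ ℕ) :
    MvPolynomial (Fin d) K → MvPolynomial (Fin d) K :=
  (List.ofFn fun i : Fin d => (fun P => MvPolynomial.pderiv i P)^[j i]).foldr (· ∘ ·) id

/-- The (finite) set of multi-indices `j ∈ ℕ^d` with `|j| = 2`: every such `j` is of the
form `e_i + e_l` for a pair `(i, l)`. -/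
noncomputable def degTwoIndices (d : ℕ) : Finset (Fin d →₀ ℕ) :=
  (Finset.univ : Finset (Fin d × Fin d)).image fun il =>
    Finsupp.single il.1 1 + Finsupp.single il.2 1

/-- The second-order constant-coefficient operator `L⋆ P = ∑_{|j|=2} c_j ∂^j P`. -/
noncomputable def Lstar {K : Type*} [CommSemiring K] {d : ℕ} (c : (Fin d →₀ ℕ) → K)
    (P : MvPolynomial (Fin d) K) : MvPolynomial (Fin d) K :=
  ∑ j ∈ degTwoIndices d, c j • iterPDeriv j P

open MvPolynomial in
lemma aux_iter {K : Type*} [CommSemiring K] {d : ℕ} (i : Fin d) (r : ℕ) (m : Fin d →₀ ℕ) (a : K) :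
    (fun P : MvPolynomial (Fin d) K => pderiv i P)^[r] (monomial m a)
      = monomial (m - Finsupp.single i r) (a * ((m i).descFactorial r : ℕ)) := by
  induction r with
  | zero => simp
  | succ r ih =>
    rw [Function.iterate_succ_apply', ih, pderiv_monomial, tsub_tsub, ← Finsupp.single_add]
    congr 1
    simp only [Finsupp.coe_tsub, Pi.sub_apply, Finsupp.single_eq_same, Nat.descFactorial_succ]
    push_cast
    ring

open MvPolynomial in
lemma aux_list {K : Type*} [CommSemiring K] {d : ℕ} (j : Fin d →₀ ℕ) (m : Fin d →₀ ℕ) (a : K)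
    (l : List (Fin d)) (hl : l.Nodup) :
    ((l.map fun i : Fin d => (fun P : MvPolynomial (Fin d) K => pderiv i P)^[j i]).foldr
      (· ∘ ·) id) (monomial m a)
      = monomial (m - (l.map fun i => Finsupp.single i (j i)).sum)
        (a * ((l.map fun i => (m i).descFactorial (j i)).prod : ℕ)) := by
  induction l with
  | nil => simp
  | cons i l ih =>
    rw [List.nodup_cons] at hl
    simp only [List.map_cons, List.foldr_cons, Function.comp_apply, List.sum_cons, List.prod_cons]
    rw [ih hl.2, aux_iter, tsub_tsub, add_comm (Finsupp.single i (j i))]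
    have h0 : ((l.map fun i => Finsupp.single i (j i)).sum : Fin d →₀ ℕ) i = 0 := by
      have := hl.1
      clear ih hl
      induction l with
      | nil => simp
      | cons x l ih =>
        simp only [List.mem_cons, not_or] at this
        simp [ih this.2, Finsupp.single_apply, Ne.symm this.1]
    congr 1
    simp only [Finsupp.coe_tsub, Pi.sub_apply, h0]
    push_cast
    simp only [Nat.sub_zero]
    ring

open MvPolynomial in
lemma aux_mono {K : Type*} [CommSemiring K] {d : ℕ} (j : Fin d →₀ ℕ) (m : Fin d →₀ ℕ) (a : K) :
    iterPDeriv j (monomial m a)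
      = monomial (m - j) (a * ((∏ i, (m i).descFactorial (j i)) : ℕ)) := by
  unfold iterPDeriv
  rw [List.ofFn_eq_map, aux_list _ _ _ _ (List.nodup_finRange d)]
  rw [← List.ofFn_eq_map, ← List.ofFn_eq_map, List.sum_ofFn, List.prod_ofFn,
    Finsupp.univ_sum_single]

lemma aux_lin {K : Type*} [CommSemiring K] {d : ℕ} (j : Fin d →₀ ℕ) :
    ∃ T : MvPolynomial (Fin d) K →ₗ[K] MvPolynomial (Fin d) K, ∀ P, iterPDeriv j P = T P := by
  unfold iterPDeriv
  rw [List.ofFn_eq_map]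
  induction List.finRange d with
  | nil => exact ⟨LinearMap.id, fun P => rfl⟩
  | cons i l ih =>
    obtain ⟨T, hT⟩ := ih
    refine ⟨((MvPolynomial.pderiv i).toLinearMap ^ (j i)) ∘ₗ T, fun P => ?_⟩
    simp only [List.map_cons, List.foldr_cons, Function.comp_apply, hT, LinearMap.comp_apply,
      Module.End.pow_apply]
    rfl

lemma aux_Llin {K : Type*} [CommSemiring K] {d : ℕ} (c : (Fin d →₀ ℕ) → K) :
    ∃ T : MvPolynomial (Fin d) K →ₗ[K] MvPolynomial (Fin d) K, ∀ P, Lstar c P = T P := by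
  choose T hT using fun j : Fin d →₀ ℕ => aux_lin (K := K) j
  exact ⟨∑ j ∈ degTwoIndices d, c j • T j, fun P => by simp [Lstar, hT]⟩

open MvPolynomial in
theorem stmt_7 {K : Type*} [Field K] [CharZero K] {d : ℕ} (hd : 1 ≤ d)
    (c : (Fin d →₀ ℕ) → K)
    (hc : ∃ k : Fin d, c (Finsupp.single k 2) ≠ 0) :
    ∀ n : ℕ, ∀ Q ∈ MvPolynomial.homogeneousSubmodule (Fin d) K n,
      ∃ P ∈ MvPolynomial.homogeneousSubmodule (Fin d) K (n + 2), Lstar c P = Q := by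
  obtain ⟨k, hk⟩ := hc
  intro n
  obtain ⟨T, hT⟩ := aux_Llin c
  have key : ∀ N : ℕ, ∀ m : Fin d →₀ ℕ, m.degree = n → n - m k < N → ∀ a : K,
      monomial m a ∈ (homogeneousSubmodule (Fin d) K (n+2)).map T := by
    intro N
    induction N with
    | zero => intro m _ h; omega
    | succ N ih =>
      intro m hm hN a
      set M := m + Finsupp.single k 2 with hM
      have hMd : M.degree = n + 2 := by simp [hM, hm]
      set D : K := ((∏ i, (M i).descFactorial (Finsupp.single k 2 i) : ℕ) : K) with hD
      have hD0 : D ≠ 0 := by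
        rw [hD, Nat.cast_ne_zero, Finset.prod_ne_zero_iff]
        intro i _
        rw [Ne, Nat.descFactorial_eq_zero_iff_lt]
        simp [hM]
      set b : K := a / (c (Finsupp.single k 2) * D) with hb
      have h1 : T (monomial M b) ∈ (homogeneousSubmodule (Fin d) K (n+2)).map T :=
        Submodule.mem_map_of_mem (isHomogeneous_monomial _ hMd)
      have hmem : Finsupp.single k 2 ∈ degTwoIndices d := by
        simp only [degTwoIndices, Finset.mem_image]
        exact ⟨(k, k), Finset.mem_univ _, by simp [← Finsupp.single_add]⟩
      rw [← hT, Lstar, ← Finset.add_sum_erase _ _ hmem] at h1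
      have h2 : c (Finsupp.single k 2) • iterPDeriv (Finsupp.single k 2) (monomial M b)
          = monomial m a := by
        rw [aux_mono, smul_monomial]
        congr 1
        · simp [hM]
        · rw [← hD, hb, smul_eq_mul]; field_simp
      rw [h2] at h1
      refine (Submodule.add_mem_iff_left _ (Submodule.sum_mem _ ?_)).1 h1
      intro j hj
      refine Submodule.smul_mem _ _ ?_
      rw [Finset.mem_erase] at hj
      obtain ⟨hj, hj'⟩ := hj
      have hjd : j.degree = 2 ∧ j k ≤ 1 := by
        simp only [degTwoIndices, Finset.mem_image] at hj'
        obtain ⟨⟨p, q⟩, -, rfl⟩ := hj'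
        refine ⟨by simp, ?_⟩
        by_contra hcon
        apply hj
        simp only [Finsupp.add_apply, Finsupp.single_apply] at hcon
        split_ifs at hcon with h h'
        · subst h h'; simp [← Finsupp.single_add]
        all_goals omega
      rw [aux_mono]
      by_cases hle : j ≤ M
      · have e : (M - j).degree = n := by
          have h3 : (M - j + j).degree = n + 2 := by rw [tsub_add_cancel_of_le hle, hMd]
          rw [map_add] at h3
          omega
        have e2 : (M - j) k ≤ n := e ▸ Finsupp.le_degree k _
        have e3 : (M - j) k = m k + 2 - j k := by simp [hM]
        exact ih _ e (by omega) _
      · have : ∏ i, (M i).descFactorial (j i) = 0 := by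
          rw [Finsupp.le_def] at hle
          push Not at hle
          obtain ⟨i, hi⟩ := hle
          exact Finset.prod_eq_zero (Finset.mem_univ i) (Nat.descFactorial_eq_zero_iff_lt.2 hi)
        rw [this]
        simp
  intro Q hQ
  have : Q ∈ (homogeneousSubmodule (Fin d) K (n+2)).map T := by
    rw [Q.as_sum]
    refine Submodule.sum_mem _ fun m hm => key _ m ?_ (Nat.lt_succ_self _) _
    rw [mem_homogeneousSubmodule] at hQ
    have := hQ (mem_support_iff.1 hm)
    rwa [Finsupp.degree_eq_weight_one]
  obtain ⟨P, hP, h⟩ := this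
  exact ⟨P, hP, by rw [hT, h]⟩
end

section
/- Let d ≥ 1, p ≥ 2 be integers, x0 ∈ ℝ^d, and let g : ℝ^d → ℂ be of class C^{p−2} on an open neighborhood of x0. Then for every a ∈ ℂ and every b ∈ ℂ^d there exists a polynomial P ∈ ℂ[X_1,...,X_d] of total degree at most p with P(x0) = a and ∂_i P(x0) = b_i for all i, such that the function F(x) := ΔP(x) + Σ_{i=1}^d (∂_i P(x))^2 + g(x) satisfies: all iterated derivatives of F of order at most p−2 vanish at x0 (i.e., iteratedFDeriv of order m of F at x0 is zero for every m ∈ {0,...,p−2}). -/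
open MvPolynomial

noncomputable def lapL (d : ℕ) : MvPolynomial (Fin d) ℂ →ₗ[ℂ] MvPolynomial (Fin d) ℂ :=
  ∑ i : Fin d, (pderiv i).toLinearMap ∘ₗ (pderiv i).toLinearMap

theorem lapL_apply (d : ℕ) (Q : MvPolynomial (Fin d) ℂ) :
    lapL d Q = ∑ i, pderiv i (pderiv i Q) := by
  simp [lapL]

theorem lap_mono (d : ℕ) (i0 : Fin d) (n : ℕ) : ∀ (N : ℕ) (s : Fin d →₀ ℕ), s.degree = n →
    n - s i0 = N → monomial s (1:ℂ) ∈ (homogeneousSubmodule (Fin d) ℂ (n+2)).map (lapL d) := by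
  intro N
  induction N using Nat.strong_induction_on with
  | _ N ih =>
  intro s hs hN
  set M := (homogeneousSubmodule (Fin d) ℂ (n+2)).map (lapL d)
  set T : MvPolynomial (Fin d) ℂ := monomial (s + Finsupp.single i0 2) 1 with hT
  have hTM : lapL d T ∈ M := by
    refine Submodule.mem_map_of_mem ?_
    rw [mem_homogeneousSubmodule]
    apply isHomogeneous_monomial
    rw [map_add, hs, Finsupp.degree_single]
  have h0 : pderiv i0 (pderiv i0 T) = (((s i0 : ℂ) + 2) * (s i0 + 1)) • monomial s (1:ℂ) := by
    rw [hT, pderiv_monomial, pderiv_monomial, smul_monomial]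
    congr 1
    · congr 1
      · ext j
        by_cases h : j = i0
        · subst h; simp
        · simp [Finsupp.single_apply, Ne.symm h]
    · simp
      try ring
  have h1 : ∀ i ∈ Finset.univ.erase i0, pderiv i (pderiv i T) ∈ M := by
    intro i hi
    have hi : i ≠ i0 := (Finset.mem_erase.1 hi).1
    rw [hT, pderiv_monomial, pderiv_monomial]
    by_cases h2 : s i ≤ 1
    · have : ((1:ℂ) * ((s + Finsupp.single i0 2 : Fin d →₀ ℕ) i : ℕ) *
        (((s + Finsupp.single i0 2 - Finsupp.single i 1 : Fin d →₀ ℕ) i : ℕ) : ℂ)) = 0 := by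
        have : s i = 0 ∨ s i = 1 := by omega
        rcases this with h | h <;> simp [h, Ne.symm hi]
      rw [this]; simp
    · set t := s + Finsupp.single i0 2 - Finsupp.single i 1 - Finsupp.single i 1 with ht
      have e : t + Finsupp.single i 2 = s + Finsupp.single i0 2 := by
        ext j
        by_cases h : j = i
        · subst h; simp [ht, Finsupp.single_apply, Ne.symm hi]; omega
        · simp [ht, Finsupp.single_apply, Ne.symm h]
      have hd : t.degree = n := by
        have := congrArg Finsupp.degree e
        simp [hs] at this
        exact this
      have ht0 : t i0 = s i0 + 2 := by
        simp [ht, Finsupp.single_apply, hi]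
      have hle : t i0 ≤ n := hd ▸ Finsupp.le_degree i0 t
      have := ih (n - t i0) (by omega) t hd rfl
      rw [← mul_one (_ * _ * _ : ℂ), ← smul_eq_mul (_ * _ : ℂ) (1:ℂ), ← smul_monomial]
      exact M.smul_mem _ this
  have h2 : (((s i0 : ℂ) + 2) * (s i0 + 1)) • monomial s (1:ℂ) ∈ M := by
    have : (((s i0 : ℂ) + 2) * (s i0 + 1)) • monomial s (1:ℂ) =
      lapL d T - ∑ i ∈ Finset.univ.erase i0, pderiv i (pderiv i T) := by
      rw [lapL_apply, ← h0, ← Finset.add_sum_erase _ _ (Finset.mem_univ i0)]; ring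
    rw [this]
    exact M.sub_mem hTM (M.sum_mem h1)
  refine (M.smul_mem_iff ?_).1 h2
  exact_mod_cast (by positivity : (s i0 + 2) * (s i0 + 1) ≠ 0)

theorem lap_surj (d : ℕ) (hd : 1 ≤ d) (n : ℕ) (Q : MvPolynomial (Fin d) ℂ)
    (hQ : Q.IsHomogeneous n) :
    ∃ S : MvPolynomial (Fin d) ℂ, S.IsHomogeneous (n+2) ∧ ∑ i, pderiv i (pderiv i S) = Q := by
  have : Q ∈ (homogeneousSubmodule (Fin d) ℂ (n+2)).map (lapL d) := by
    rw [Q.as_sum]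
    refine Submodule.sum_mem _ fun s hs => ?_
    have := lap_mono d ⟨0, hd⟩ n _ s (by
      have := hQ (mem_support_iff.1 hs)
      rw [← this, Finsupp.degree_eq_weight_one]; rfl) rfl
    rw [← mul_one (coeff s Q), ← smul_eq_mul, ← smul_monomial]
    exact Submodule.smul_mem _ _ this
  obtain ⟨S, hS, h⟩ := this
  exact ⟨S, hS, by rw [← lapL_apply, h]⟩

theorem hom_mem (d n : ℕ) (Q : MvPolynomial (Fin d) ℂ) (hQ : Q.IsHomogeneous n) :
    Q ∈ idealOfVars (Fin d) ℂ ^ n := by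
  rw [mem_pow_idealOfVars_iff]
  intro s hs
  have := hQ (mem_support_iff.1 hs)
  rw [← this, Finsupp.degree_eq_weight_one]; rfl

theorem alg_exists (d : ℕ) (hd : 1 ≤ d) (G : MvPolynomial (Fin d) ℂ) (a : ℂ) (b : Fin d → ℂ)
    (n : ℕ) : ∃ Q : MvPolynomial (Fin d) ℂ, Q.totalDegree ≤ n + 1 ∧ eval (fun _ => 0) Q = a ∧
      (∀ i, eval (fun _ => 0) (pderiv i Q) = b i) ∧
      (∑ i, pderiv i (pderiv i Q)) + (∑ i, (pderiv i Q)^2) + G ∈ idealOfVars (Fin d) ℂ ^ n := by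
  induction n with
  | zero =>
    refine ⟨C a + ∑ i, C (b i) * X i, ?_, by simp, ?_, by simp⟩
    · refine (totalDegree_add _ _).trans (max_le (by simp) ?_)
      refine totalDegree_finsetSum_le fun i _ => ?_
      refine (totalDegree_mul _ _).trans (by simp)
    · intro i
      simp [pderiv_X, Pi.single_apply]
  | succ n ih =>
    obtain ⟨Q, h1, h2, h3, h4⟩ := ih
    set R := (∑ i, pderiv i (pderiv i Q)) + (∑ i, (pderiv i Q)^2) + G with hR
    set I := idealOfVars (Fin d) ℂ
    obtain ⟨S, hS, hS'⟩ := lap_surj d hd n _ (homogeneousComponent_isHomogeneous n R)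
    have hSi : ∀ i, pderiv i S ∈ I ^ (n+1) := fun i => hom_mem d (n+1) _ hS.pderiv
    have key : ∀ (m : ℕ) (p : MvPolynomial (Fin d) ℂ), p ∈ I^(m+1) → eval (fun _ => (0:ℂ)) p = 0 := by
      intro m p hp
      have := (mem_pow_idealOfVars_iff' _ _).1 hp 0 (by simp)
      rw [← constantCoeff_eq] at this
      rw [← eval_zero] at this
      exact this
    refine ⟨Q - S, ?_, ?_, ?_, ?_⟩
    · exact (totalDegree_sub _ _).trans (max_le (by omega) hS.totalDegree_le)
    · rw [map_sub, h2, key (n+1) S (hom_mem _ _ _ hS), sub_zero]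
    · intro i
      rw [map_sub, map_sub, h3, key n _ (hSi i), sub_zero]
    · have : (∑ i, pderiv i (pderiv i (Q - S))) + (∑ i, (pderiv i (Q - S))^2) + G =
        (R - homogeneousComponent n R) + ∑ i, (pderiv i S - 2 * pderiv i Q) * pderiv i S := by
        rw [← hS', hR]
        have : ∑ i, (pderiv i S - 2 * pderiv i Q) * pderiv i S =
          (∑ i, (pderiv i (Q - S))^2) - ∑ i, (pderiv i Q)^2 := by
          rw [← Finset.sum_sub_distrib]
          refine Finset.sum_congr rfl fun i _ => ?_
          rw [map_sub]; ring
        rw [this]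
        simp only [map_sub, Finset.sum_sub_distrib]
        ring
      rw [this]
      refine Ideal.add_mem _ ?_ (Ideal.sum_mem _ fun i _ => Ideal.mul_mem_left _ _ (hSi i))
      rw [mem_pow_idealOfVars_iff'] at h4 ⊢
      intro x hx
      rw [coeff_sub, coeff_homogeneousComponent]
      split_ifs with h
      · simp
      · rw [h4 x (by omega), sub_zero]

/-- translation -/
noncomputable def tr {d : ℕ} (c : Fin d → ℂ) : MvPolynomial (Fin d) ℂ →ₐ[ℂ] MvPolynomial (Fin d) ℂ :=
  aeval (fun i => X i - C (c i))

theorem pderiv_tr {d : ℕ} (c : Fin d → ℂ) (i : Fin d) (Q : MvPolynomial (Fin d) ℂ) :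
    pderiv i (tr c Q) = tr c (pderiv i Q) := by
  induction Q using MvPolynomial.induction_on with
  | C a => simp [tr]
  | add p q hp hq => simp [hp, hq]
  | mul_X p j h =>
    rw [map_mul, pderiv_mul, pderiv_mul, h]
    simp [tr, pderiv_X, Pi.single_apply]
    split_ifs <;> simp

theorem eval_tr {d : ℕ} (c x : Fin d → ℂ) (Q : MvPolynomial (Fin d) ℂ) :
    eval x (tr c Q) = eval (fun i => x i - c i) Q := by
  induction Q using MvPolynomial.induction_on with
  | C a => simp [tr]
  | add p q hp hq => simp [hp, hq]
  | mul_X p j h => simp [h]; simp [tr]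

theorem totalDegree_tr {d : ℕ} (c : Fin d → ℂ) (Q : MvPolynomial (Fin d) ℂ) :
    (tr c Q).totalDegree ≤ Q.totalDegree := by
  conv_lhs => rw [Q.as_sum]
  rw [map_sum]
  refine totalDegree_finsetSum_le fun s hs => ?_
  refine le_trans ?_ (le_totalDegree hs)
  rw [tr, aeval_monomial]
  refine (totalDegree_mul _ _).trans ?_
  rw [algebraMap_eq, totalDegree_C, zero_add, Finsupp.prod]
  refine (totalDegree_finsetProd _ _).trans ?_
  refine Finset.sum_le_sum fun i _ => ?_
  refine (totalDegree_pow _ _).trans ?_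
  have : (X i - C (c i) : MvPolynomial (Fin d) ℂ).totalDegree ≤ 1 :=
    (totalDegree_sub _ _).trans (by simp)
  nlinarith

theorem iter_symm {E F : Type*} [NormedAddCommGroup E] [NormedSpace ℝ E] [NormedAddCommGroup F]
    [NormedSpace ℝ F] (f : E → F) (n : ℕ) : ∀ (x : E), ContDiffAt ℝ n f x →
    ∀ (σ : Equiv.Perm (Fin n)) (v : Fin n → E),
      iteratedFDeriv ℝ n f x (v ∘ σ) = iteratedFDeriv ℝ n f x v := by
  induction n with
  | zero => intro x _ σ v; congr 1; ext i; exact i.elim0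
  | succ n ih =>
    intro x hf σ
    have hσ : σ ∈ Submonoid.closure (Set.range fun i : Fin n ↦ Equiv.swap i.castSucc i.succ) := by
      rw [Equiv.Perm.mclosure_swap_castSucc_succ]; trivial
    induction hσ using Submonoid.closure_induction with
    | one => intro v; rfl
    | mul a b _ _ ha hb =>
      intro v
      rw [Equiv.Perm.coe_mul, ← Function.comp_assoc, hb, ha]
    | mem s hs =>
      obtain ⟨i, rfl⟩ := hs
      intro v
      cases n with
      | zero => exact i.elim0
      | succ k =>
      have hdiff : DifferentiableAt ℝ (iteratedFDeriv ℝ (k+1) f) x :=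
        (hf.iteratedFDeriv_right (m := 1) (i := k+1) (by push_cast; rw [add_comm])).differentiableAt
          (by simp)
      refine Fin.cases ?_ (fun j => ?_) i
      · have h2 : ContDiffAt ℝ 2 (iteratedFDeriv ℝ k f) x :=
          hf.iteratedFDeriv_right (by norm_cast; omega)
        have hs := h2.isSymmSndFDerivAt (by simp)
        have aux : ∀ w : Fin (k+2) → E, iteratedFDeriv ℝ (k+1+1) f x w =
            fderiv ℝ (fderiv ℝ (iteratedFDeriv ℝ k f)) x (w 0) (w 1) (Fin.tail (Fin.tail w)) := by
          intro w
          rw [hdiff.iteratedFDeriv_succ_apply_left']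
          have : (fun y => iteratedFDeriv ℝ (k+1) f y (Fin.tail w)) =
            fun y => fderiv ℝ (iteratedFDeriv ℝ k f) y (w 1) (Fin.tail (Fin.tail w)) := by
            ext y; rfl
          rw [this]
          have hd2 : DifferentiableAt ℝ (fderiv ℝ (iteratedFDeriv ℝ k f)) x :=
            (h2.fderiv_right (m := 1) (by norm_num)).differentiableAt (by simp)
          have hd3 := hd2.clm_apply (differentiableAt_const (w 1))
          rw [fderiv_continuousMultilinear_apply_const hd3]
          simp only [ContinuousMultilinearMap.flipLinear_apply_apply, ContinuousLinearMap.flipMultilinear_apply_apply]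
          rw [fderiv_clm_apply hd2 (differentiableAt_const _)]
          simp
        rw [aux, aux]
        have e0 : (v ∘ Equiv.swap (Fin.castSucc (0 : Fin (k+1))) (Fin.succ 0)) 0 = v 1 := by
          simp
        have e1 : (v ∘ Equiv.swap (Fin.castSucc (0 : Fin (k+1))) (Fin.succ 0)) 1 = v 0 := by
          simp
        have e2 : Fin.tail (Fin.tail (v ∘ Equiv.swap (Fin.castSucc (0 : Fin (k+1))) (Fin.succ 0))) =
            Fin.tail (Fin.tail v) := by
          ext j
          simp only [Fin.tail, Function.comp]
          rw [Equiv.swap_apply_of_ne_of_ne]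
          · simp [Fin.ext_iff]
          · simp [Fin.ext_iff]
        rw [e0, e1, e2, hs.eq]
      · rw [hdiff.iteratedFDeriv_succ_apply_left', hdiff.iteratedFDeriv_succ_apply_left']
        have e0 : (v ∘ Equiv.swap (Fin.castSucc (Fin.succ j)) (Fin.succ (Fin.succ j))) 0 = v 0 := by
          simp only [Function.comp]
          rw [Equiv.swap_apply_of_ne_of_ne]
          · simp [Fin.ext_iff]
          · simp [Fin.ext_iff]
        have e1 : Fin.tail (v ∘ Equiv.swap (Fin.castSucc (Fin.succ j)) (Fin.succ (Fin.succ j))) =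
            Fin.tail v ∘ Equiv.swap (Fin.castSucc j) (Fin.succ j) := by
          ext l
          simp only [Fin.tail, Function.comp]
          rw [(Fin.succ_injective _).map_swap, Fin.succ_castSucc]
        rw [e0, e1]
        congr 1
        apply Filter.EventuallyEq.fderiv_eq
        have : ∀ᶠ y in nhds x, ContDiffAt ℝ ((k+1 : ℕ)) f y :=
          (hf.of_le (by norm_cast; omega)).eventually (by simp)
        filter_upwards [this] with y hy
        exact ih y hy _ _

/-- evaluation in coordinates centered at `x0` -/
noncomputable def ev {d : ℕ} (x0 : EuclideanSpace ℝ (Fin d)) (Q : MvPolynomial (Fin d) ℂ)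
    (x : EuclideanSpace ℝ (Fin d)) : ℂ := eval (fun i => (x i : ℂ) - (x0 i : ℂ)) Q

theorem coord_contDiff {d : ℕ} (i : Fin d) (c : ℂ) (N : ℕ∞) :
    ContDiff ℝ N (fun x : EuclideanSpace ℝ (Fin d) => (x i : ℂ) - c) := by
  have h : ContDiff ℝ N (fun x : EuclideanSpace ℝ (Fin d) => x i) :=
    (EuclideanSpace.proj i : EuclideanSpace ℝ (Fin d) →L[ℝ] ℝ).contDiff
  exact (Complex.ofRealCLM.contDiff.comp h).sub contDiff_const

theorem ev_contDiff {d : ℕ} (x0 : EuclideanSpace ℝ (Fin d)) (Q : MvPolynomial (Fin d) ℂ)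
    (N : ℕ∞) : ContDiff ℝ N (ev x0 Q) := by
  induction Q using MvPolynomial.induction_on with
  | C a =>
    have : ev x0 (C a) = fun _ => a := by ext; simp [ev]
    rw [this]; exact contDiff_const
  | add p q hp hq =>
    have : ev x0 (p + q) = fun x => ev x0 p x + ev x0 q x := by ext; simp [ev]
    rw [this]; exact hp.add hq
  | mul_X p i h =>
    have : ev x0 (p * X i) = fun x => ev x0 p x * ((x i : ℂ) - (x0 i : ℂ)) := by ext; simp [ev]
    rw [this]; exact h.mul (coord_contDiff i _ N)

theorem ev_vanish {d : ℕ} (x0 : EuclideanSpace ℝ (Fin d)) (n : ℕ) : ∀ (Q : MvPolynomial (Fin d) ℂ),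
    Q ∈ idealOfVars (Fin d) ℂ ^ n → ∀ m < n, iteratedFDeriv ℝ m (ev x0 Q) x0 = 0 := by
  induction n with
  | zero => intro Q _ m hm; omega
  | succ n ih =>
    intro Q hQ
    rw [pow_succ] at hQ
    induction hQ using Submodule.mul_induction_on' with
    | add p hp q hq h1 h2 =>
      intro m hm
      have : ev x0 (p + q) = fun x => ev x0 p x + ev x0 q x := by ext; simp [ev]
      rw [this, fun_iteratedFDeriv_add_apply (ev_contDiff x0 p m).contDiffAt
        (ev_contDiff x0 q m).contDiffAt, h1 m hm, h2 m hm, add_zero]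
    | mem_mul_mem p hp q hq =>
      intro m hm
      have : ev x0 (p * q) = fun x => ev x0 p x * ev x0 q x := by ext; simp [ev]
      rw [this, ← norm_le_zero_iff]
      refine (norm_iteratedFDeriv_mul_le (ev_contDiff x0 p m) (ev_contDiff x0 q m) x0 le_rfl).trans ?_
      refine le_of_eq (Finset.sum_eq_zero fun i hi => ?_)
      rw [Finset.mem_range] at hi
      by_cases h : i < n
      · rw [ih p hp i h]; simp
      · have h0 : m - i = 0 := by omega
        have : ev x0 q x0 = 0 := by
          have := (mem_pow_idealOfVars_iff' 1 _).1 (by simpa using hq) 0 (by simp)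
          rw [← constantCoeff_eq] at this
          simp only [ev, sub_self]
          rw [← eval_zero] at this
          exact this
        rw [h0, norm_iteratedFDeriv_zero, this]; simp

theorem ev_multilinear {d : ℕ} (x0 : EuclideanSpace ℝ (Fin d)) (n : ℕ)
    (L : ContinuousMultilinearMap ℝ (fun _ : Fin n => EuclideanSpace ℝ (Fin d)) ℂ) :
    ∃ H : MvPolynomial (Fin d) ℂ, H.IsHomogeneous n ∧
      ev x0 H = fun x => L (fun _ => x - x0) := by
  refine ⟨∑ r : Fin n → Fin d, C (L (fun j => EuclideanSpace.single (r j) (1:ℝ))) * ∏ j, X (r j),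
    ?_, ?_⟩
  · refine IsHomogeneous.sum _ _ _ fun r _ => ?_
    have h := IsHomogeneous.prod (R := ℂ) (σ := Fin d) (Finset.univ : Finset (Fin n))
      (fun j => X (r j)) (fun _ => 1) (fun j _ => isHomogeneous_X _ _)
    have h2 := (isHomogeneous_C (Fin d) (L (fun j => EuclideanSpace.single (r j) (1:ℝ)))).mul h
    simpa using h2
  · ext x
    have hx : x - x0 = ∑ i, (x i - x0 i) • EuclideanSpace.single i (1:ℝ) := by
      ext j
      simp [Finset.sum_apply, Pi.single_apply]
    rw [hx]
    have := L.toMultilinearMap.map_sum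
      (g := fun (_ : Fin n) (i : Fin d) => (x i - x0 i) • EuclideanSpace.single i (1:ℝ))
    simp only [ContinuousMultilinearMap.coe_coe] at this
    rw [this]
    simp only [ev, map_sum, map_mul, map_prod, eval_C, eval_X]
    refine Finset.sum_congr rfl fun r _ => ?_
    have := L.toMultilinearMap.map_smul_univ (fun j => x (r j) - x0 (r j))
      (fun j => EuclideanSpace.single (r j) (1:ℝ))
    simp only [ContinuousMultilinearMap.coe_coe] at this
    rw [this, mul_comm, Complex.real_smul]
    push_cast
    rfl

theorem taylor_exists {d : ℕ} (x0 : EuclideanSpace ℝ (Fin d)) (g : EuclideanSpace ℝ (Fin d) → ℂ)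
    (n : ℕ) : ∀ (_ : ContDiffAt ℝ n g x0), ∃ G : MvPolynomial (Fin d) ℂ,
      ∀ m ≤ n, iteratedFDeriv ℝ m (fun x => g x - ev x0 G x) x0 = 0 := by
  -- step
  have step : ∀ k : ℕ, ∀ h : EuclideanSpace ℝ (Fin d) → ℂ, ContDiffAt ℝ k h x0 →
      (∀ m < k, iteratedFDeriv ℝ m h x0 = 0) → ∃ H : MvPolynomial (Fin d) ℂ,
      ∀ m ≤ k, iteratedFDeriv ℝ m (fun x => h x - ev x0 H x) x0 = 0 := by
    intro k h hh hv
    set L := (k.factorial : ℝ)⁻¹ • iteratedFDeriv ℝ k h x0 with hL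
    obtain ⟨H, hH, hHL⟩ := ev_multilinear x0 k L
    refine ⟨H, fun m hm => ?_⟩
    rw [fun_iteratedFDeriv_sub_apply (hh.of_le (by exact_mod_cast hm)) (ev_contDiff x0 H m).contDiffAt]
    rcases hm.lt_or_eq with hm | rfl
    · rw [hv m hm, ev_vanish x0 k H (hom_mem _ _ _ hH) m hm, sub_zero]
    · rw [sub_eq_zero, hHL]
      ext v
      rw [iteratedFDeriv_comp_sub m (f := fun y => L (fun _ => y)) x0 x0,
        L.iteratedFDeriv_comp_diagonal]
      have : ∀ σ : Equiv.Perm (Fin m), L (fun i => v (σ i)) =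
          (m.factorial : ℝ)⁻¹ • iteratedFDeriv ℝ m h x0 v := by
        intro σ
        rw [hL, ContinuousMultilinearMap.smul_apply]
        congr 1
        exact iter_symm h m x0 hh σ v
      rw [Finset.sum_congr rfl fun σ _ => this σ, Finset.sum_const, Finset.card_univ,
        Fintype.card_perm, Fintype.card_fin, ← Nat.cast_smul_eq_nsmul ℝ, smul_smul,
        mul_inv_cancel₀ (by exact_mod_cast m.factorial_ne_zero), one_smul]
  induction n with
  | zero => intro hg; exact step 0 g hg (by simp)
  | succ n ih =>
    intro hg
    obtain ⟨G, hG⟩ := ih (hg.of_le (by norm_cast; omega))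
    obtain ⟨H, hH⟩ := step (n+1) (fun x => g x - ev x0 G x)
      (hg.sub (ev_contDiff x0 G ((n+1 : ℕ) : ℕ∞)).contDiffAt) (fun m hm => hG m (by omega))
    refine ⟨G + H, fun m hm => ?_⟩
    have := hH m hm
    have e : (fun x => g x - ev x0 (G + H) x) = fun x => g x - ev x0 G x - ev x0 H x := by
      ext x; simp [ev]; ring
    rw [e]; exact this

/-- Existence of phase polynomials for GPWs for the operator `Δ + g`:
given `g` of class `C^{p−2}` near `x0`, for every prescribed value `a` and gradient `b`
at `x0` there is a polynomial `P` of total degree `≤ p` with `P(x0) = a`,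
`∂ᵢP(x0) = bᵢ`, such that all derivatives of order `≤ p − 2` of
`x ↦ ΔP(x) + ∑ᵢ (∂ᵢP(x))² + g(x)` vanish at `x0` (quasi-Trefftz property). -/
theorem stmt_12 (d p : ℕ) (hd : 1 ≤ d) (hp : 2 ≤ p)
    (x0 : EuclideanSpace ℝ (Fin d)) (g : EuclideanSpace ℝ (Fin d) → ℂ)
    (hg : ∃ V : Set (EuclideanSpace ℝ (Fin d)), IsOpen V ∧ x0 ∈ V ∧
      ContDiffOn ℝ (↑(p - 2) : ℕ∞) g V) :
    ∀ (a : ℂ) (b : Fin d → ℂ),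
      ∃ P : MvPolynomial (Fin d) ℂ,
        P.totalDegree ≤ p ∧
        MvPolynomial.eval (fun i => (x0 i : ℂ)) P = a ∧
        (∀ i : Fin d,
          MvPolynomial.eval (fun i' => (x0 i' : ℂ)) (MvPolynomial.pderiv i P) = b i) ∧
        ∀ m : ℕ, m ≤ p - 2 →
          iteratedFDeriv ℝ m (fun x : EuclideanSpace ℝ (Fin d) =>
            (∑ i : Fin d, MvPolynomial.eval (fun i' => (x i' : ℂ))
                (MvPolynomial.pderiv i (MvPolynomial.pderiv i P))) +
              (∑ i : Fin d,
                (MvPolynomial.eval (fun i' => (x i' : ℂ)) (MvPolynomial.pderiv i P)) ^ 2) +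
              g x) x0 = 0 := by
  intro a b
  obtain ⟨V, hV, hxV, hgV⟩ := hg
  have hgc : ContDiffAt ℝ (p - 2 : ℕ) g x0 := hgV.contDiffAt (hV.mem_nhds hxV)
  obtain ⟨G, hG⟩ := taylor_exists x0 g (p - 2) hgc
  obtain ⟨Q, h1, h2, h3, h4⟩ := alg_exists d hd G a b (p - 1)
  set c : Fin d → ℂ := fun i => (x0 i : ℂ) with hc
  refine ⟨tr c Q, (totalDegree_tr c Q).trans (by omega), ?_, ?_, ?_⟩
  · rw [eval_tr]; simpa using h2
  · intro i
    rw [pderiv_tr, eval_tr]; simpa using h3 i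
  · intro m hm
    set R := (∑ i, pderiv i (pderiv i Q)) + (∑ i, (pderiv i Q)^2) + G with hR
    have e : (fun x : EuclideanSpace ℝ (Fin d) =>
            (∑ i : Fin d, MvPolynomial.eval (fun i' => (x i' : ℂ))
                (MvPolynomial.pderiv i (MvPolynomial.pderiv i (tr c Q)))) +
              (∑ i : Fin d,
                (MvPolynomial.eval (fun i' => (x i' : ℂ)) (MvPolynomial.pderiv i (tr c Q))) ^ 2) +
              g x) = fun x => ev x0 R x + (g x - ev x0 G x) := by
      ext x
      simp only [pderiv_tr, eval_tr, ev, hR, map_add, map_sum, map_pow, hc]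
      ring
    rw [e, fun_iteratedFDeriv_add_apply (ev_contDiff x0 R m).contDiffAt
      ((hgc.of_le (by exact_mod_cast hm)).sub (ev_contDiff x0 G m).contDiffAt),
      hG m hm, ev_vanish x0 (p - 1) R h4 m (by omega), add_zero]
end

section
/- Let d ≥ 1, p ≥ 2 be integers, x0 ∈ ℝ^d, and let g : ℝ^d → ℂ be of class C^{p−2} on an open neighborhood of x0. Then the set of polynomials P ∈ ℂ[X_1,...,X_d] of total degree at most p such that the function F(x) := ΔP(x) + Σ_{i=1}^d (∂_i P(x))^2 + g(x) has all its iterated derivatives of order at most p−2 vanish at x0 is infinite. -/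
open scoped ContDiff Topology

lemma qt_aux {E A : Type*} [NormedAddCommGroup E] [NormedSpace ℝ E] [NormedAddCommGroup A]
    [NormedSpace ℝ A] (G : E → E →L[ℝ] A) (L : A →L[ℝ] ℂ) (x a b : E)
    (hG : DifferentiableAt ℝ G x) :
    fderiv ℝ (fun y => L (G y b)) x a = L (fderiv ℝ G x a b) := by
  have := ((L.comp (ContinuousLinearMap.apply ℝ A b)).hasFDerivAt.comp x hG.hasFDerivAt).fderiv
  change fderiv ℝ (fun y => L (G y b)) x = _ at this
  rw [this]; rfl

lemma qt_swap {E : Type*} [NormedAddCommGroup E] [NormedSpace ℝ E] (f : E → ℂ) (n : ℕ) :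
    ∀ x, ContDiffAt ℝ ((n+1 : ℕ) : ℕ∞ω) f x → ∀ (i : Fin n) (v : Fin (n+1) → E),
    iteratedFDeriv ℝ (n+1) f x (v ∘ Equiv.swap i.castSucc i.succ) =
      iteratedFDeriv ℝ (n+1) f x v := by
  induction n with
  | zero => intro x _ i; exact i.elim0
  | succ n ih =>
    intro x hf i v
    have key : ∀ w : Fin (n+2) → E, iteratedFDeriv ℝ (n+2) f x w =
        fderiv ℝ (fun y => iteratedFDeriv ℝ (n+1) f y (Fin.tail w)) x (w 0) := by
      intro w
      rw [iteratedFDeriv_succ_apply_left]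
      have hd : DifferentiableAt ℝ (iteratedFDeriv ℝ (n+1) f) x :=
        (hf.iteratedFDeriv_right (m := 1) (i := n+1) (by norm_cast; omega)).differentiableAt (by simp)
      have := ((ContinuousMultilinearMap.apply ℝ (fun _ : Fin (n+1) => E) ℂ
        (Fin.tail w)).hasFDerivAt.comp x hd.hasFDerivAt).fderiv
      change fderiv ℝ (fun y => iteratedFDeriv ℝ (n+1) f y (Fin.tail w)) x = _ at this
      rw [this]; rfl
    refine Fin.cases ?_ (fun j => ?_) i
    · have key2 : ∀ w : Fin (n+2) → E, iteratedFDeriv ℝ (n+2) f x w =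
        fderiv ℝ (fderiv ℝ (iteratedFDeriv ℝ n f)) x (w 0) (w 1) (Fin.tail (Fin.tail w)) := by
        intro w
        rw [key]
        have hc : ContDiffAt ℝ 2 (iteratedFDeriv ℝ n f) x :=
          hf.iteratedFDeriv_right (m := 2) (i := n) (by norm_cast; omega)
        have hd : DifferentiableAt ℝ (fderiv ℝ (iteratedFDeriv ℝ n f)) x :=
          (hc.fderiv_right (m := 1) (by norm_num)).differentiableAt (by simp)
        exact qt_aux _ (ContinuousMultilinearMap.apply ℝ (fun _ : Fin n => E) ℂ
          (Fin.tail (Fin.tail w))) x (w 0) (w 1) hd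
      have hs : IsSymmSndFDerivAt ℝ (iteratedFDeriv ℝ n f) x :=
        (hf.iteratedFDeriv_right (m := 2) (i := n) (by norm_cast; omega)).isSymmSndFDerivAt (by simp)
      rw [key2, key2]
      have h0 : (v ∘ Equiv.swap (0 : Fin (n+1)).castSucc (0 : Fin (n+1)).succ) 0 = v 1 := by
        simp
      have h1 : (v ∘ Equiv.swap (0 : Fin (n+1)).castSucc (0 : Fin (n+1)).succ) 1 = v 0 := by
        simp
      have h2 : Fin.tail (Fin.tail (v ∘ Equiv.swap (0 : Fin (n+1)).castSucc (0 : Fin (n+1)).succ))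
          = Fin.tail (Fin.tail v) := by
        funext k
        simp only [Fin.tail, Function.comp]
        rw [Equiv.swap_apply_of_ne_of_ne]
        · simp [Fin.ext_iff]
        · simp [Fin.ext_iff]
      rw [h0, h1, h2, hs.eq]
    · rw [key, key]
      have h0 : (v ∘ Equiv.swap j.succ.castSucc j.succ.succ) 0 = v 0 := by
        simp only [Function.comp]
        rw [Equiv.swap_apply_of_ne_of_ne]
        · simp [Fin.ext_iff]
        · simp [Fin.ext_iff]
      have h1 : Fin.tail (v ∘ Equiv.swap j.succ.castSucc j.succ.succ) =
          Fin.tail v ∘ Equiv.swap j.castSucc j.succ := by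
        funext k
        simp only [Fin.tail, Function.comp]
        rw [← Fin.succ_castSucc]
        congr 1
        exact (Fin.succ_injective (n+1)).swap_apply _ _ _
      rw [h0, h1]
      congr 1
      apply Filter.EventuallyEq.fderiv_eq
      filter_upwards [hf.eventually (by simp)] with y hy
      exact ih y (hy.of_le (by norm_cast; omega)) j _

lemma qt_perm {E : Type*} [NormedAddCommGroup E] [NormedSpace ℝ E] (f : E → ℂ) (n : ℕ) (x : E)
    (hf : ContDiffAt ℝ (n : ℕ∞ω) f x) (σ : Equiv.Perm (Fin n)) : ∀ (v : Fin n → E),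
    iteratedFDeriv ℝ n f x (v ∘ σ) = iteratedFDeriv ℝ n f x v := by
  cases n with
  | zero => intro v; congr 1; funext i; exact i.elim0
  | succ n =>
    have : σ ∈ Submonoid.closure (Set.range fun i : Fin n ↦ Equiv.swap i.castSucc i.succ) := by
      rw [Equiv.Perm.mclosure_swap_castSucc_succ]; trivial
    induction this using Submonoid.closure_induction with
    | mem s hs => obtain ⟨i, rfl⟩ := hs; exact qt_swap f n x hf i
    | one => intro v; rfl
    | mul a b _ _ ha hb =>
      intro v
      have : v ∘ ⇑(a * b) = (v ∘ a) ∘ b := rfl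
      rw [this, hb, ha]

/-- smooth and vanishing to order n -/
def QZ {E : Type*} [NormedAddCommGroup E] [NormedSpace ℝ E] (x0 : E) (n : ℕ) (f : E → ℂ) : Prop :=
  ContDiff ℝ ∞ f ∧ ∀ m < n, iteratedFDeriv ℝ m f x0 = 0

section
variable {E : Type*} [NormedAddCommGroup E] [NormedSpace ℝ E] {x0 : E}

lemma QZ.mono {a b : ℕ} {f : E → ℂ} (hf : QZ x0 a f) (h : b ≤ a) : QZ x0 b f :=
  ⟨hf.1, fun m hm => hf.2 m (by omega)⟩

lemma QZ.mul {a b : ℕ} {f g : E → ℂ} (hf : QZ x0 a f) (hg : QZ x0 b g) :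
    QZ x0 (a + b) (fun x => f x * g x) := by
  refine ⟨hf.1.mul hg.1, fun m hm => ?_⟩
  rw [← norm_le_zero_iff]
  refine (norm_iteratedFDeriv_mul_le hf.1 hg.1 x0 (n := m) (by exact_mod_cast le_top)).trans ?_
  apply le_of_eq
  apply Finset.sum_eq_zero
  intro i hi
  rcases lt_or_ge i a with h | h
  · simp [hf.2 i h]
  · simp [hg.2 (m - i) (by simp at hi; omega)]

lemma QZ.add {a : ℕ} {f g : E → ℂ} (hf : QZ x0 a f) (hg : QZ x0 a g) :
    QZ x0 a (fun x => f x + g x) := by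
  refine ⟨hf.1.add hg.1, fun m hm => ?_⟩
  have := iteratedFDeriv_add_apply (x := x0) (i := m) (𝕜 := ℝ) (f := f) (g := g)
    (hf.1.contDiffAt.of_le (by exact_mod_cast le_top))
    (hg.1.contDiffAt.of_le (by exact_mod_cast le_top))
  rw [hf.2 m hm, hg.2 m hm, add_zero] at this
  exact this

lemma QZ.const (c : ℂ) : QZ x0 0 (fun _ => c) := ⟨contDiff_const, fun m hm => by omega⟩

lemma QZ.zero (n : ℕ) : QZ x0 n (fun _ => (0:ℂ)) := ⟨contDiff_const, fun m hm => by
  change iteratedFDeriv ℝ m 0 x0 = 0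
  simp⟩

lemma QZ.sum {ι : Type*} (s : Finset ι) {a : ℕ} {f : ι → E → ℂ} (hf : ∀ i ∈ s, QZ x0 a (f i)) :
    QZ x0 a (fun x => ∑ i ∈ s, f i x) := by
  classical
  induction s using Finset.induction_on with
  | empty => simpa using QZ.zero a
  | insert i s hi ih =>
    simp only [Finset.sum_insert hi]
    exact (hf i (by simp)).add (ih fun j hj => hf j (by simp [hj]))

lemma QZ.pow {a : ℕ} {f : E → ℂ} (hf : QZ x0 a f) (k : ℕ) : QZ x0 (k * a) (fun x => f x ^ k) := by
  induction k with
  | zero => simpa using QZ.const 1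
  | succ k ih => simp only [pow_succ, Nat.succ_mul]; exact ih.mul hf

lemma QZ.prod {ι : Type*} (s : Finset ι) {a : ι → ℕ} {f : ι → E → ℂ}
    (hf : ∀ i ∈ s, QZ x0 (a i) (f i)) :
    QZ x0 (∑ i ∈ s, a i) (fun x => ∏ i ∈ s, f i x) := by
  classical
  induction s using Finset.induction_on with
  | empty => simpa using QZ.const 1
  | insert i s hi ih =>
    simp only [Finset.prod_insert hi, Finset.sum_insert hi]
    exact (hf i (by simp)).mul (ih fun j hj => hf j (by simp [hj]))
end


noncomputable section
open MvPolynomial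

def qlap {d : ℕ} (P : MvPolynomial (Fin d) ℂ) : MvPolynomial (Fin d) ℂ :=
  ∑ i : Fin d, pderiv i (pderiv i P)

lemma qlap_add {d : ℕ} (P Q : MvPolynomial (Fin d) ℂ) : qlap (P + Q) = qlap P + qlap Q := by
  simp [qlap, Finset.sum_add_distrib]

lemma qlap_sub {d : ℕ} (P Q : MvPolynomial (Fin d) ℂ) : qlap (P - Q) = qlap P - qlap Q := by
  simp [qlap, Finset.sum_sub_distrib]

lemma qlap_sum {d : ℕ} {ι : Type*} (s : Finset ι) (P : ι → MvPolynomial (Fin d) ℂ) :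
    qlap (∑ i ∈ s, P i) = ∑ i ∈ s, qlap (P i) := by
  simp only [qlap, map_sum]
  rw [Finset.sum_comm]

lemma qlap_monomial_surj {d : ℕ} (i0 : Fin d) (n : ℕ) : ∀ (w : ℕ) (s : Fin d →₀ ℕ) (c : ℂ),
    ∑ i ∈ Finset.univ.erase i0, s i = w → s.degree = n →
    ∃ Q : MvPolynomial (Fin d) ℂ, Q.IsHomogeneous (n + 2) ∧ qlap Q = monomial s c := by
  intro w
  induction w using Nat.strong_induction_on with
  | _ w ih =>
  intro s c hw hn
  set t := s + Finsupp.single i0 2 with ht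
  set a : ℂ := c / ((s i0 + 2) * (s i0 + 1)) with ha
  have ht0 : t.degree = n + 2 := by simp [ht, map_add, hn]
  have hder : ∀ i, pderiv i (pderiv i (monomial t a)) =
      monomial (t - Finsupp.single i 1 - Finsupp.single i 1)
        (a * t i * ((t - Finsupp.single i 1 : Fin d →₀ ℕ) i)) := by
    intro i; rw [pderiv_monomial, pderiv_monomial]
  have hmain : pderiv i0 (pderiv i0 (monomial t a)) = monomial s c := by
    rw [hder]
    have e1 : t - Finsupp.single i0 1 - Finsupp.single i0 1 = s := by
      ext j
      by_cases h : j = i0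
      · subst h; simp [ht]
      · simp [ht, Finsupp.single_apply, Ne.symm h]
    rw [e1]
    congr 1
    simp [ht, ha]
    have h1 : (s i0 : ℂ) + 2 ≠ 0 := by norm_cast
    have h2 : (s i0 : ℂ) + 1 ≠ 0 := by norm_cast
    field_simp
  have hoth : ∀ i, ∃ Q : MvPolynomial (Fin d) ℂ, Q.IsHomogeneous (n + 2) ∧
      (i ≠ i0 → qlap Q = pderiv i (pderiv i (monomial t a))) := by
    intro i
    by_cases hi : i = i0
    · exact ⟨0, isHomogeneous_zero _ _ _, fun h => absurd hi h⟩
    have hti : t i = s i := by simp [ht, Finsupp.single_apply, Ne.symm hi]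
    rcases Nat.lt_or_ge (s i) 2 with h2 | h2
    · refine ⟨0, isHomogeneous_zero _ _ _, fun _ => ?_⟩
      rw [hder]
      have : (a * t i * ((t - Finsupp.single i 1 : Fin d →₀ ℕ) i) : ℂ) = 0 := by
        rw [Finsupp.tsub_apply, hti]
        interval_cases s i <;> simp
      rw [this]
      simp [qlap]
    · have hu : t - Finsupp.single i 1 - Finsupp.single i 1 + Finsupp.single i 2 = t := by
        ext j
        by_cases h : j = i
        · subst h; simp [hti]; omega
        · simp [Finsupp.single_apply, Ne.symm h]
      set u := t - Finsupp.single i 1 - Finsupp.single i 1 with hu'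
      have hdeg : u.degree = n := by
        have := congrArg Finsupp.degree hu
        rw [map_add, ht0] at this
        simpa using this
      have hwt : ∑ j ∈ Finset.univ.erase i0, u j + 2 = w := by
        have : ∑ j ∈ Finset.univ.erase i0, t j = w := by
          rw [← hw]
          apply Finset.sum_congr rfl
          intro j hj
          simp at hj
          simp [ht, Finsupp.single_apply, Ne.symm hj]
        rw [← this, ← hu]
        simp [Finset.sum_add_distrib, Finsupp.single_apply, hi]
      obtain ⟨Q, hQ, hQ'⟩ := ih _ (by omega) u
        (a * t i * ((t - Finsupp.single i 1 : Fin d →₀ ℕ) i)) rfl hdeg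
      exact ⟨Q, hQ, fun _ => by rw [hQ', hder]⟩
  choose Q hQ hQ' using hoth
  refine ⟨monomial t a - ∑ i ∈ Finset.univ.erase i0, Q i,
    (isHomogeneous_monomial _ ht0).sub (IsHomogeneous.sum _ _ _ fun i _ => hQ i), ?_⟩
  rw [qlap_sub, qlap_sum]
  rw [Finset.sum_congr rfl (fun i hi => hQ' i (Finset.ne_of_mem_erase hi))]
  rw [← hmain, qlap, ← Finset.add_sum_erase _ _ (Finset.mem_univ i0)]
  ring

lemma qlap_surj {d : ℕ} (i0 : Fin d) (n : ℕ) (H : MvPolynomial (Fin d) ℂ)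
    (hH : H.IsHomogeneous n) :
    ∃ Q : MvPolynomial (Fin d) ℂ, Q.IsHomogeneous (n + 2) ∧ qlap Q = H := by
  have : ∀ s : Fin d →₀ ℕ, ∃ Q : MvPolynomial (Fin d) ℂ, Q.IsHomogeneous (n + 2) ∧
      qlap Q = monomial s (coeff s H) := by
    intro s
    by_cases hs : s.degree = n
    · exact qlap_monomial_surj i0 n _ s _ rfl hs
    · exact ⟨0, isHomogeneous_zero _ _ _, by rw [hH.coeff_eq_zero hs]; simp [qlap]⟩
  choose Q hQ hQ' using this
  refine ⟨∑ s ∈ H.support, Q s, IsHomogeneous.sum _ _ _ fun i _ => hQ i, ?_⟩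
  rw [qlap_sum]
  simp only [hQ']
  exact H.support_sum_monomial_coeff

/-- translation -/
def qtau {d : ℕ} (x0 : EuclideanSpace ℝ (Fin d)) :
    MvPolynomial (Fin d) ℂ →ₐ[ℂ] MvPolynomial (Fin d) ℂ :=
  aeval (fun i => X i - C (x0 i : ℂ))

lemma qtau_pderiv {d : ℕ} (x0 : EuclideanSpace ℝ (Fin d)) (i : Fin d) (Q) :
    pderiv i (qtau x0 Q) = qtau x0 (pderiv i Q) := by
  induction Q using MvPolynomial.induction_on with
  | C a => simp [qtau]
  | add p q hp hq => simp [hp, hq]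
  | mul_X p j hp =>
    have hX : qtau x0 (X j) = X j - C (x0 j : ℂ) := by simp [qtau]
    simp only [map_mul, Derivation.leibniz, hp, smul_eq_mul, map_add]
    rw [hX]
    simp only [map_sub, pderiv_C, sub_zero, pderiv_X]
    congr 2
    by_cases h : j = i
    · subst h; simp
    · simp [Pi.single_apply, Ne.symm h, h]

lemma qtau_eval {d : ℕ} (x0 x : EuclideanSpace ℝ (Fin d)) (Q) :
    eval (fun i => (x i : ℂ)) (qtau x0 Q) = eval (fun i => ((x - x0) i : ℂ)) Q := by
  induction Q using MvPolynomial.induction_on with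
  | C a => simp [qtau]
  | add p q hp hq => simp only [map_add, hp, hq]
  | mul_X p j hp => simp only [map_mul, hp]; simp [qtau]

lemma qtau_degree {d n : ℕ} (x0 : EuclideanSpace ℝ (Fin d)) (Q) (hQ : IsHomogeneous Q n) :
    (qtau x0 Q).totalDegree ≤ n := by
  rw [← Q.support_sum_monomial_coeff, map_sum]
  apply totalDegree_finsetSum_le
  intro s hs
  have : ∑ i, s i = n := by
    have := hQ.degree_eq_sum_deg_support hs
    rw [← Finsupp.degree_eq_sum]
    exact this.symm
  rw [qtau, aeval_monomial]
  refine (totalDegree_mul _ _).trans ?_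
  rw [show algebraMap ℂ (MvPolynomial (Fin d) ℂ) (coeff s Q) = C (coeff s Q) from rfl]
  rw [totalDegree_C, zero_add, Finsupp.prod_fintype _ _ (by simp), ← this]
  refine (totalDegree_finsetProd _ _).trans (Finset.sum_le_sum fun i _ => ?_)
  refine (totalDegree_pow _ _).trans ?_
  have : (X i - C (x0 i : ℂ)).totalDegree ≤ 1 := by
    refine (totalDegree_sub _ _).trans ?_
    simp
  nlinarith

lemma qz_lin {d : ℕ} (x0 : EuclideanSpace ℝ (Fin d)) (i : Fin d) :
    QZ x0 1 (fun x => ((x - x0) i : ℂ)) := by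
  constructor
  · have h : ContDiff ℝ ∞ (fun x : EuclideanSpace ℝ (Fin d) => (x - x0) i) := by
      simp only [PiLp.sub_apply]
      fun_prop
    exact Complex.ofRealCLM.contDiff.comp h
  · intro m hm
    obtain rfl : m = 0 := by omega
    ext v
    simp

lemma qz_hom {d n : ℕ} (x0 : EuclideanSpace ℝ (Fin d)) (Q) (hQ : IsHomogeneous Q n) :
    QZ x0 n (fun x => eval (fun i => (x i : ℂ)) (qtau x0 Q)) := by
  simp only [qtau_eval]
  simp only [eval_eq']
  apply QZ.sum
  intro s hs
  have : ∑ i, s i = n := by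
    have := hQ.degree_eq_sum_deg_support hs
    rw [← Finsupp.degree_eq_sum]
    exact this.symm
  have h2 := (QZ.const (x0 := x0) (coeff s Q)).mul
    (QZ.prod Finset.univ (fun i _ => (qz_lin x0 i).pow (s i)))
  simpa [this] using h2

lemma qz_poly {d : ℕ} (x0 : EuclideanSpace ℝ (Fin d)) (Q) :
    QZ x0 0 (fun x => eval (fun i => (x i : ℂ)) Q) := by
  refine ⟨?_, by simp⟩
  simp only [eval_eq']
  refine ContDiff.sum fun s _ => contDiff_const.mul (contDiff_prod fun i _ => ContDiff.pow ?_ _)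
  have h : ContDiff ℝ ∞ (fun x : EuclideanSpace ℝ (Fin d) => x i) := by fun_prop
  exact Complex.ofRealCLM.contDiff.comp h

lemma qt_taylor {d n : ℕ} (x0 : EuclideanSpace ℝ (Fin d)) (f : EuclideanSpace ℝ (Fin d) → ℂ)
    (hf : ContDiffAt ℝ (n : ℕ∞ω) f x0) :
    ∃ H : MvPolynomial (Fin d) ℂ, H.IsHomogeneous n ∧
      iteratedFDeriv ℝ n (fun x => eval (fun i => (x i : ℂ)) (qtau x0 H)) x0 =
        - iteratedFDeriv ℝ n f x0 := by
  set T := iteratedFDeriv ℝ n f x0 with hT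
  set S := (-(n.factorial : ℝ)⁻¹) • T with hS
  let e : Fin d → EuclideanSpace ℝ (Fin d) := fun i => EuclideanSpace.single i (1:ℝ)
  refine ⟨∑ r : Fin n → Fin d, C (S (fun j => e (r j))) * ∏ j, X (r j), ?_, ?_⟩
  · apply IsHomogeneous.sum
    intro r _
    apply IsHomogeneous.C_mul
    have := IsHomogeneous.prod (Finset.univ : Finset (Fin n))
      (fun j => (X (r j) : MvPolynomial (Fin d) ℂ)) (fun _ => 1) (fun j _ => isHomogeneous_X _ _)
    simpa using this
  · have hfun : (fun x : EuclideanSpace ℝ (Fin d) => eval (fun i => (x i : ℂ)) (qtau x0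
        (∑ r : Fin n → Fin d, C (S (fun j => e (r j))) * ∏ j, X (r j)))) =
        fun x => (fun y => S (fun _ => y)) (x - x0) := by
      funext x
      rw [qtau_eval]
      set y := x - x0
      have hy : y = ∑ i, y i • e i := by
        ext k
        simp [e, Finset.sum_apply, Pi.single_apply]
      have : S (fun _ => y) = S (fun _ => ∑ i, y i • e i) := by rw [← hy]
      simp only []
      rw [this, ContinuousMultilinearMap.map_sum]
      simp only [ContinuousMultilinearMap.map_smul_univ]
      simp only [map_sum, map_mul, eval_C, map_prod, eval_X]
      apply Finset.sum_congr rfl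
      intro r _
      rw [Complex.real_smul]
      push_cast
      ring
    rw [hfun, iteratedFDeriv_comp_sub (f := fun y => S (fun _ => y))]
    ext v
    rw [ContinuousMultilinearMap.iteratedFDeriv_comp_diagonal]
    have : ∀ σ : Equiv.Perm (Fin n), S (fun i => v (σ i)) = S v := by
      intro σ
      simp only [hS, ContinuousMultilinearMap.smul_apply]
      congr 1
      exact qt_perm f n x0 hf σ v
    simp only [this, Finset.sum_const, Finset.card_univ, Fintype.card_perm, Fintype.card_fin]
    simp only [hS, ContinuousMultilinearMap.smul_apply, ContinuousMultilinearMap.neg_apply]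
    have hn : (n.factorial : ℂ) ≠ 0 := by exact_mod_cast n.factorial_ne_zero
    rw [nsmul_eq_mul, Complex.real_smul]
    push_cast
    field_simp

def qF {d : ℕ} (g : EuclideanSpace ℝ (Fin d) → ℂ) (P : MvPolynomial (Fin d) ℂ) :
    EuclideanSpace ℝ (Fin d) → ℂ := fun x =>
  (∑ i : Fin d, MvPolynomial.eval (fun i' => (x i' : ℂ))
              (MvPolynomial.pderiv i (MvPolynomial.pderiv i P))) +
            (∑ i : Fin d,
              (MvPolynomial.eval (fun i' => (x i' : ℂ)) (MvPolynomial.pderiv i P)) ^ 2) +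
            g x

lemma qF_contDiffAt {d : ℕ} (x0) (g : EuclideanSpace ℝ (Fin d) → ℂ) (P) (n : ℕ)
    (hg : ContDiffAt ℝ (n : ℕ∞ω) g x0) : ContDiffAt ℝ (n : ℕ∞ω) (qF g P) x0 := by
  have hp : ∀ Q : MvPolynomial (Fin d) ℂ, ContDiffAt ℝ (n : ℕ∞ω)
      (fun x : EuclideanSpace ℝ (Fin d) => eval (fun i => (x i : ℂ)) Q) x0 := fun Q =>
    (qz_poly x0 Q).1.contDiffAt.of_le (by exact_mod_cast le_top)
  exact ((ContDiffAt.sum fun i _ => hp _).add (ContDiffAt.sum fun i _ => (hp _).pow 2)).add hg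

lemma qt_exists {d : ℕ} (i0 : Fin d) (x0) (g : EuclideanSpace ℝ (Fin d) → ℂ) (N : ℕ)
    (hg : ContDiffAt ℝ (N : ℕ∞ω) g x0) (n : ℕ) : n ≤ N + 1 →
    ∃ P : MvPolynomial (Fin d) ℂ, P.totalDegree ≤ n + 1 ∧
      ∀ m < n, iteratedFDeriv ℝ m (qF g P) x0 = 0 := by
  induction n with
  | zero => intro _; exact ⟨0, by simp, by simp⟩
  | succ n ih =>
    intro hn
    obtain ⟨P, hP, hPm⟩ := ih (by omega)
    have hgn : ContDiffAt ℝ (n : ℕ∞ω) g x0 := hg.of_le (by exact_mod_cast (by omega : n ≤ N))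
    obtain ⟨H, hH, hHT⟩ := qt_taylor x0 _ (qF_contDiffAt x0 g P n hgn)
    obtain ⟨Q, hQ, hQH⟩ := qlap_surj i0 n H hH
    refine ⟨P + qtau x0 Q, (totalDegree_add _ _).trans
      (max_le (by omega) (qtau_degree x0 Q hQ)), ?_⟩
    let h : EuclideanSpace ℝ (Fin d) → ℂ := fun x => eval (fun i => (x i : ℂ)) (qtau x0 H)
    let R : EuclideanSpace ℝ (Fin d) → ℂ := fun x => ∑ i : Fin d,
      ((eval (fun i => (x i : ℂ)) (C 2 * pderiv i P + qtau x0 (pderiv i Q))) *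
        eval (fun i => (x i : ℂ)) (qtau x0 (pderiv i Q)))
    have hh : QZ x0 n h := qz_hom x0 H hH
    have hR : QZ x0 (n + 1) R := by
      apply QZ.sum
      intro i _
      have h1 := qz_hom x0 _ (hQ.pderiv (i := i))
      exact ((qz_poly x0 (C 2 * pderiv i P + qtau x0 (pderiv i Q))).mul h1).mono (by omega)
    have hsum : qF g (P + qtau x0 Q) = qF g P + (h + R) := by
      funext x
      have e1 : ∑ i, eval (fun i => (x i : ℂ)) (qtau x0 (pderiv i (pderiv i Q))) = h x := by
        simp only [h, ← hQH, qlap, map_sum]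
      simp only [qF, Pi.add_apply, ← e1, R, map_add, qtau_pderiv, map_mul, eval_C, add_sq,
        Finset.sum_add_distrib, add_mul]
      simp only [pow_two, mul_assoc]
      ring
    intro m hm
    have cF : ContDiffAt ℝ (m : ℕ∞ω) (qF g P) x0 :=
      (qF_contDiffAt x0 g P n hgn).of_le (by exact_mod_cast (by omega : m ≤ n))
    have ch : ContDiffAt ℝ (m : ℕ∞ω) h x0 := hh.1.contDiffAt.of_le (by exact_mod_cast le_top)
    have cR : ContDiffAt ℝ (m : ℕ∞ω) R x0 := hR.1.contDiffAt.of_le (by exact_mod_cast le_top)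
    rw [hsum, iteratedFDeriv_add_apply (g := h + R) cF (ch.add cR), iteratedFDeriv_add_apply ch cR,
      hR.2 m hm, add_zero]
    rcases Nat.lt_or_ge m n with h1 | h1
    · rw [hPm m h1, hh.2 m h1, add_zero]
    · obtain rfl : m = n := by omega
      rw [show iteratedFDeriv ℝ m h x0 = _ from hHT]
      exact add_neg_cancel _

end


/-- The set of polynomials `P` of total degree `≤ p` satisfying the
quasi-Trefftz property for the operator `Δ + g` (all derivatives of order `≤ p − 2` of
`x ↦ ΔP(x) + ∑ᵢ (∂ᵢP(x))² + g(x)` vanish at `x0`) is infinite. -/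
theorem stmt_13 (d p : ℕ) (hd : 1 ≤ d) (hp : 2 ≤ p)
    (x0 : EuclideanSpace ℝ (Fin d)) (g : EuclideanSpace ℝ (Fin d) → ℂ)
    (hg : ∃ V : Set (EuclideanSpace ℝ (Fin d)), IsOpen V ∧ x0 ∈ V ∧
      ContDiffOn ℝ (↑(p - 2) : ℕ∞) g V) :
    {P : MvPolynomial (Fin d) ℂ |
      P.totalDegree ≤ p ∧
      ∀ m : ℕ, m ≤ p - 2 →
        iteratedFDeriv ℝ m (fun x : EuclideanSpace ℝ (Fin d) =>
          (∑ i : Fin d, MvPolynomial.eval (fun i' => (x i' : ℂ))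
              (MvPolynomial.pderiv i (MvPolynomial.pderiv i P))) +
            (∑ i : Fin d,
              (MvPolynomial.eval (fun i' => (x i' : ℂ)) (MvPolynomial.pderiv i P)) ^ 2) +
            g x) x0 = 0}.Infinite := by
  obtain ⟨V, hVo, hxV, hgV⟩ := hg
  have hgx : ContDiffAt ℝ ((p - 2 : ℕ) : ℕ∞ω) g x0 := by
    exact_mod_cast hgV.contDiffAt (hVo.mem_nhds hxV)
  obtain ⟨P, hP, hPm⟩ := qt_exists ⟨0, hd⟩ x0 g (p - 2) hgx (p - 1) (by omega)
  refine Set.infinite_of_injective_forall_mem (f := fun c : ℂ => P + MvPolynomial.C c) ?_ ?_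
  · intro a b hab
    simpa using hab
  · intro c
    refine ⟨(MvPolynomial.totalDegree_add _ _).trans (max_le (by omega) (by simp)), ?_⟩
    intro m hm
    have := hPm m (by omega)
    simp only [map_add, MvPolynomial.pderiv_C, add_zero]
    exact this
end

section
/- Let κ ∈ ℂ with κ ≠ 0, p ∈ ℕ, and x0 ∈ ℝ^2. For a unit vector d ∈ ℝ^2 (|d| = 1), let ψ_d : ℝ^2 → ℂ be the plane wave ψ_d(x) = exp(iκ d·(x − x0)), and let T_p ψ_d denote its Taylor polynomial of degree p centered at x0, namely T_p ψ_d(x) = Σ_{m=0}^{p} (iκ d·(x − x0))^m / m!. Then the ℂ-linear span of the set { T_p ψ_d : d ∈ ℝ^2, |d| = 1 } inside the space of complex polynomial functions on ℝ^2 has dimension at most 2p+1. -/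
open Polynomial in
/-- The generating polynomial in the direction variable. -/
noncomputable def genPoly (c : ℂ) (p : ℕ) (z z' : ℂ) : ℂ[X] :=
  ∑ m ∈ Finset.range (p + 1),
    C ((c / 2) ^ m / (Nat.factorial m : ℂ)) * (C z' * X ^ 2 + C z) ^ m * X ^ (p - m)

open Polynomial in
lemma genPoly_natDegree (c : ℂ) (p : ℕ) (z z' : ℂ) :
    (genPoly c p z z').natDegree < 2 * p + 1 := by
  refine Nat.lt_succ_of_le (natDegree_sum_le_of_forall_le _ _ fun m hm => ?_)
  have hm' : m ≤ p := Nat.lt_succ_iff.mp (Finset.mem_range.mp hm)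
  have h1 : (C z' * X ^ 2 + C z : ℂ[X]).natDegree ≤ 2 := by compute_degree
  have h2 : ((C z' * X ^ 2 + C z : ℂ[X]) ^ m).natDegree ≤ m * 2 := natDegree_pow_le_of_le m h1
  have h3 : (C ((c / 2) ^ m / (Nat.factorial m : ℂ)) * (C z' * X ^ 2 + C z) ^ m).natDegree
      ≤ m * 2 := (natDegree_C_mul_le _ _).trans h2
  have h4 := natDegree_mul_le_of_le h3 (natDegree_X_pow_le (R := ℂ) (p - m))
  exact h4.trans (by omega)

lemma genPoly_eval (c : ℂ) (p : ℕ) (z z' w w' : ℂ) (h : w' * w = 1) :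
    w' ^ p * (genPoly c p z z').eval w =
      ∑ m ∈ Finset.range (p + 1), (c * ((w * z' + w' * z) / 2)) ^ m / (Nat.factorial m : ℂ) := by
  rw [genPoly, Polynomial.eval_finsetSum, Finset.mul_sum]
  refine Finset.sum_congr rfl fun m hm => ?_
  have hm' : m ≤ p := Nat.lt_succ_iff.mp (Finset.mem_range.mp hm)
  obtain ⟨k, rfl⟩ := Nat.exists_eq_add_of_le hm'
  simp only [Polynomial.eval_mul, Polynomial.eval_C, Polynomial.eval_pow, Polynomial.eval_add,
    Polynomial.eval_X, Nat.add_sub_cancel_left]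
  have e1 : c * ((w * z' + w' * z) / 2) = (c / 2) * (w' * (z' * w ^ 2 + z)) := by
    linear_combination (-(c / 2) * w * z') * h
  have e2 : w' ^ k * w ^ k = 1 := by rw [← mul_pow, h, one_pow]
  rw [e1, mul_pow (c / 2), mul_pow w', pow_add]
  linear_combination ((c / 2) ^ m / (Nat.factorial m : ℂ) * w' ^ m * (z' * w ^ 2 + z) ^ m) * e2

/-- In dimension 2, the span of the degree-`p` Taylor polynomials
(centered at `x0`) of all plane waves `x ↦ exp(iκ d·(x − x0))`, `|d| = 1`, has
dimension at most `2p + 1`. -/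
theorem stmt_15 (κ : ℂ) (hκ : κ ≠ 0) (p : ℕ) (x0 : EuclideanSpace ℝ (Fin 2)) :
    Module.rank ℂ
      (Submodule.span ℂ
        {f : EuclideanSpace ℝ (Fin 2) → ℂ |
          ∃ dv : EuclideanSpace ℝ (Fin 2), ‖dv‖ = 1 ∧
            f = fun x => ∑ m ∈ Finset.range (p + 1),
              (Complex.I * κ * ((∑ i, dv i * (x i - x0 i) : ℝ) : ℂ)) ^ m /
                (Nat.factorial m : ℂ)}) ≤
      ((2 * p + 1 : ℕ) : Cardinal) := by
  classical
  let Z : EuclideanSpace ℝ (Fin 2) → ℂ := fun x =>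
    ((x 0 - x0 0 : ℝ) : ℂ) + ((x 1 - x0 1 : ℝ) : ℂ) * Complex.I
  let Z' : EuclideanSpace ℝ (Fin 2) → ℂ := fun x =>
    ((x 0 - x0 0 : ℝ) : ℂ) - ((x 1 - x0 1 : ℝ) : ℂ) * Complex.I
  let g : Fin (2 * p + 1) → (EuclideanSpace ℝ (Fin 2) → ℂ) := fun k x =>
    (genPoly (Complex.I * κ) p (Z x) (Z' x)).coeff k
  have hle : Submodule.span ℂ
        {f : EuclideanSpace ℝ (Fin 2) → ℂ |
          ∃ dv : EuclideanSpace ℝ (Fin 2), ‖dv‖ = 1 ∧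
            f = fun x => ∑ m ∈ Finset.range (p + 1),
              (Complex.I * κ * ((∑ i, dv i * (x i - x0 i) : ℝ) : ℂ)) ^ m /
                (Nat.factorial m : ℂ)} ≤ Submodule.span ℂ (Set.range g) := by
    rw [Submodule.span_le]
    rintro f ⟨d, hd, rfl⟩
    have hd2 : d 0 ^ 2 + d 1 ^ 2 = 1 := by
      have := EuclideanSpace.real_norm_sq_eq d
      rw [hd, Fin.sum_univ_two] at this
      linarith
    have hd3 : (d 0 : ℂ) ^ 2 + (d 1 : ℂ) ^ 2 = 1 := by
      rw [← Complex.ofReal_pow, ← Complex.ofReal_pow, ← Complex.ofReal_add, hd2, Complex.ofReal_one]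
    have hw : ((d 0 : ℂ) - d 1 * Complex.I) * ((d 0 : ℂ) + d 1 * Complex.I) = 1 := by
      linear_combination hd3 - (d 1 : ℂ) ^ 2 * Complex.I_sq
    have key : (fun x : EuclideanSpace ℝ (Fin 2) => ∑ m ∈ Finset.range (p + 1),
              (Complex.I * κ * ((∑ i, d i * (x i - x0 i) : ℝ) : ℂ)) ^ m /
                (Nat.factorial m : ℂ)) =
        ∑ k : Fin (2 * p + 1), (((d 0 : ℂ) - d 1 * Complex.I) ^ p *
          ((d 0 : ℂ) + d 1 * Complex.I) ^ (k : ℕ)) • g k := by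
      funext x
      have h1 := genPoly_eval (Complex.I * κ) p (Z x) (Z' x) _ _ hw
      have h2 : (((d 0 : ℂ) + d 1 * Complex.I) * Z' x + ((d 0 : ℂ) - d 1 * Complex.I) * Z x) / 2
          = ((∑ i, d i * (x i - x0 i) : ℝ) : ℂ) := by
        simp only [Z, Z', Fin.sum_univ_two]
        push_cast
        linear_combination (-(d 1 : ℂ) * (x 1 - x0 1)) * Complex.I_sq
      rw [h2] at h1
      rw [← h1, Polynomial.eval_eq_sum_range' (genPoly_natDegree _ _ _ _), Finset.mul_sum,
        Finset.sum_range, Finset.sum_apply]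
      refine Finset.sum_congr rfl fun k _ => ?_
      simp only [g, Pi.smul_apply, smul_eq_mul]
      ring
    rw [key]
    exact Submodule.sum_mem _ fun k _ =>
      Submodule.smul_mem _ _ (Submodule.subset_span ⟨k, rfl⟩)
  refine (Submodule.rank_mono hle).trans ((rank_span_le _).trans ?_)
  exact Cardinal.mk_range_le.trans (by simp)
end

section
/- Let κ ∈ ℂ with κ ≠ 0, p ∈ ℕ, and x0 ∈ ℝ^3. For a unit vector d ∈ ℝ^3 (|d| = 1), let ψ_d : ℝ^3 → ℂ be the plane wave ψ_d(x) = exp(iκ d·(x − x0)), and let T_p ψ_d denote its Taylor polynomial of degree p centered at x0, namely T_p ψ_d(x) = Σ_{m=0}^{p} (iκ d·(x − x0))^m / m!. Then the ℂ-linear span of the set { T_p ψ_d : d ∈ ℝ^3, |d| = 1 } inside the space of complex polynomial functions on ℝ^3 has dimension at most (p+1)^2. -/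
abbrev E3 := EuclideanSpace ℝ (Fin 3)
abbrev S3 := {d : E3 // ‖d‖ = 1}

noncomputable def mon (u v : ℕ) : S3 → E3 → ℂ := fun d _ =>
  if u ≤ v then (d.1 0 : ℂ) ^ u * (d.1 1 : ℂ) ^ (v - u)
  else (d.1 0 : ℂ) ^ v * (d.1 1 : ℂ) ^ (u - 1 - v) * (d.1 2 : ℂ)

noncomputable def W (p : ℕ) : Submodule (E3 → ℂ) (S3 → E3 → ℂ) :=
  Submodule.span (E3 → ℂ) (Set.range fun j : Fin (p + 1) × Fin (p + 1) => mon j.1 j.2)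

lemma mon_mem {p u v : ℕ} (hu : u ≤ p) (hv : v ≤ p) : mon u v ∈ W p :=
  Submodule.subset_span ⟨(⟨u, by omega⟩, ⟨v, by omega⟩), rfl⟩

lemma W_mono {p q : ℕ} (h : p ≤ q) : W p ≤ W q := by
  refine Submodule.span_le.2 ?_
  rintro _ ⟨⟨u, v⟩, rfl⟩
  exact mon_mem (by have := u.2; simp only; omega) (by have := v.2; simp only; omega)

noncomputable def co (i : Fin 3) : S3 → E3 → ℂ := fun d _ => (d.1 i : ℂ)

lemma sphere (d : S3) : (d.1 2 : ℂ) * (d.1 2 : ℂ) = 1 - (d.1 0 : ℂ) ^ 2 - (d.1 1 : ℂ) ^ 2 := by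
  have h := EuclideanSpace.norm_sq_eq d.1
  rw [d.2] at h
  simp only [Fin.sum_univ_three, Real.norm_eq_abs, sq_abs] at h
  have h2 : d.1 2 * d.1 2 = 1 - d.1 0 ^ 2 - d.1 1 ^ 2 := by linarith
  have h3 := congrArg (fun t : ℝ => (t : ℂ)) h2
  push_cast at h3
  exact h3

lemma co_mul_mon (i : Fin 3) {p u v : ℕ} (hu : u ≤ p) (hv : v ≤ p) :
    co i * mon u v ∈ W (p + 1) := by
  fin_cases i
  · have : co 0 * mon u v = mon (u + 1) (v + 1) := by
      funext d x
      by_cases h : u ≤ v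
      · simp [co, mon, h]; ring
      · have e : u - 1 - v = u - (v + 1) := by omega
        simp [co, mon, h, e]; ring
    change co 0 * mon u v ∈ _
    rw [this]; exact mon_mem (by omega) (by omega)
  · change co 1 * mon u v ∈ _
    by_cases h : u ≤ v
    · have : co 1 * mon u v = mon u (v + 1) := by
        funext d x
        have e : v + 1 - u = (v - u) + 1 := by omega
        simp [co, mon, h, e, Nat.le_succ_of_le h]; ring
      rw [this]; exact mon_mem (by omega) (by omega)
    · have : co 1 * mon u v = mon (u + 1) v := by
        funext d x
        have e : u - v = (u - 1 - v) + 1 := by omega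
        have h' : ¬ (u + 1 ≤ v) := by omega
        simp only [co, mon, h, h', Pi.mul_apply, if_false, Nat.add_sub_cancel, e]; ring
      rw [this]; exact mon_mem (by omega) (by omega)
  · change co 2 * mon u v ∈ _
    by_cases h : u ≤ v
    · have : co 2 * mon u v = mon (v + 1) u := by
        funext d x
        have h' : ¬ (v + 1 ≤ u) := by omega
        simp only [co, mon, h, h', Pi.mul_apply, if_false, if_true, Nat.add_sub_cancel]; ring
      rw [this]; exact mon_mem (by omega) (by omega)
    · have : co 2 * mon u v = mon v (u - 1) - mon (v + 2) (u + 1) - mon v (u + 1) := by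
        funext d x
        have h1 : v ≤ u - 1 := by omega
        have h2 : v + 2 ≤ u + 1 := by omega
        have h3 : v ≤ u + 1 := by omega
        have e2 : u + 1 - (v + 2) = u - 1 - v := by omega
        have e3 : u + 1 - v = (u - 1 - v) + 2 := by omega
        simp only [co, mon, h, h1, h2, h3, Pi.mul_apply, Pi.sub_apply, if_false, if_true, e2, e3]
        linear_combination (d.1 0 : ℂ) ^ v * (d.1 1 : ℂ) ^ (u - 1 - v) * sphere d
      rw [this]
      exact sub_mem (sub_mem (mon_mem (by omega) (by omega)) (mon_mem (by omega) (by omega)))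
        (mon_mem (by omega) (by omega))

lemma co_mul (i : Fin 3) {p : ℕ} {F : S3 → E3 → ℂ} (hF : F ∈ W p) : co i * F ∈ W (p + 1) := by
  induction hF using Submodule.span_induction with
  | mem x h =>
    obtain ⟨⟨u, v⟩, rfl⟩ := h
    exact co_mul_mon i (by have := u.2; simp only; omega) (by have := v.2; simp only; omega)
  | zero => simp
  | add x y _ _ hx hy => rw [mul_add]; exact add_mem hx hy
  | smul a x _ hx =>
    have : co i * a • x = a • (co i * x) := by
      funext d y; simp [mul_left_comm]
    rw [this]; exact Submodule.smul_mem _ _ hx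

lemma pow_mem_W (c : ℂ) (x0 : E3) (m : ℕ) :
    (fun (d : S3) (x : E3) => (c * ((∑ i, d.1 i * (x i - x0 i) : ℝ) : ℂ)) ^ m) ∈ W m := by
  induction m with
  | zero =>
    convert mon_mem (p := 0) (u := 0) (v := 0) le_rfl le_rfl using 1
    funext d x; simp [mon]
  | succ m ih =>
    have := Submodule.sum_mem (W (m + 1)) (t := Finset.univ) (fun (i : Fin 3) _ =>
      Submodule.smul_mem _ (fun x : E3 => c * ((x i - x0 i : ℝ) : ℂ)) (co_mul i ih))
    convert this using 1
    funext d x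
    simp [Fin.sum_univ_three, co, pow_succ]
    ring

/-- In dimension 3, the span of the degree-`p` Taylor polynomials
(centered at `x0`) of all plane waves `x ↦ exp(iκ d·(x − x0))`, `|d| = 1`, has
dimension at most `(p + 1)²`. -/
theorem stmt_16 (κ : ℂ) (hκ : κ ≠ 0) (p : ℕ) (x0 : EuclideanSpace ℝ (Fin 3)) :
    Module.rank ℂ
      (Submodule.span ℂ
        {f : EuclideanSpace ℝ (Fin 3) → ℂ |
          ∃ dv : EuclideanSpace ℝ (Fin 3), ‖dv‖ = 1 ∧
            f = fun x => ∑ m ∈ Finset.range (p + 1),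
              (Complex.I * κ * ((∑ i, dv i * (x i - x0 i) : ℝ) : ℂ)) ^ m /
                (Nat.factorial m : ℂ)}) ≤
      (((p + 1) ^ 2 : ℕ) : Cardinal) := by
  classical
  let F : S3 → E3 → ℂ := fun d x => ∑ m ∈ Finset.range (p + 1),
    (Complex.I * κ * ((∑ i, d.1 i * (x i - x0 i) : ℝ) : ℂ)) ^ m / (Nat.factorial m : ℂ)
  have hF : F ∈ W p := by
    have := Submodule.sum_mem (W p) (t := Finset.range (p + 1)) (fun m hm =>
      Submodule.smul_mem _ (fun _ : E3 => ((Nat.factorial m : ℂ))⁻¹)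
        (W_mono (Nat.lt_succ_iff.1 (Finset.mem_range.1 hm)) (pow_mem_W (Complex.I * κ) x0 m)))
    convert this using 1
    funext d x
    simp [F, Finset.sum_apply, div_eq_inv_mul]
  obtain ⟨g, hg⟩ := (Submodule.mem_span_range_iff_exists_fun _).1 hF
  refine le_trans (Submodule.rank_mono (t := Submodule.span ℂ (Set.range g))
    (Submodule.span_le.2 ?_)) ?_
  · rintro f ⟨dv, hd, rfl⟩
    have h1 : F ⟨dv, hd⟩ = ∑ j, mon j.1 j.2 ⟨dv, hd⟩ 0 • g j := by
      rw [← hg]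
      funext x
      simp only [Finset.sum_apply, Pi.smul_apply, smul_eq_mul, Pi.mul_apply]
      exact Finset.sum_congr rfl fun j _ => mul_comm _ _
    change F ⟨dv, hd⟩ ∈ _
    rw [h1]
    exact Submodule.sum_mem _ fun j _ => Submodule.smul_mem _ _ (Submodule.subset_span ⟨j, rfl⟩)
  · refine (rank_span_le _).trans (Cardinal.mk_range_le.trans ?_)
    simp [sq]
end
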